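/- arXiv:1309.2846 — 3 statements merged into one kernel-verified Lean document; each statement's English description precedes it below -/
import Mathlib

section
/- Let n be a positive integer, let α be a weak composition of n, let a > 0 be any scaling factor, and let f : [0,∞) → [0,∞) be a right-continuous, weakly decreasing function with f(x) → 0 as x → ∞. Then sup_{x≥0} |∂^a(ord α)(x) − f(x)| ≤ sup_{x≥0} |∂^a α(x) − f(x)|, i.e., sorting the parts of the composition in weakly decreasing order does not increase the sup-norm distance of the rescaled boundary function to f. -/
open Filter

/-- The `a`-rescaled diagram-boundary function of a sequence of pile sizes
`l : ℕ → ℕ` (0-indexed: `l k` is the `(k+1)`-st part), for a total of `n` cards: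
`∂ᵃl(x) = (a/n) · l_{⌊ax⌋+1}`. -/
noncomputable def rescaledBoundary (n : ℕ) (a : ℝ) (l : ℕ → ℕ) (x : ℝ) : ℝ :=
  (a / n) * l ⌊a * x⌋₊

/-- The decreasing rearrangement (`ord`) of a finitely supported sequence:
`ordC l k` is the `(k+1)`-st largest value among the parts of `l`, i.e. the
largest `m` such that at least `k+1` parts of `l` are `≥ m`. -/
noncomputable def ordC (l : ℕ → ℕ) (k : ℕ) : ℕ :=
  sSup {m : ℕ | ∃ s : Finset ℕ, s.card = k + 1 ∧ ∀ i ∈ s, m ≤ l i}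

/-!
Fix `k = ⌊ax⌋`. Among any `k + 1` parts, one has index at least `k`, so some `i ≥ k` has
`α i ≥ ordC α k`; and the first `k + 1` parts cannot all exceed `ordC α k`, so some `i ≤ k` has
`α i ≤ ordC α k`. Moving from `x` to a point `y` of the block `⌊ay⌋ = i` therefore makes `∂ᵃα(y)`
at least as far above (respectively below) `f(y)` as `∂ᵃ(ord α)(x)` is above (below) `f(x)`,
because `f` is decreasing.
-/

section Ord

variable {α : ℕ → ℕ}

theorem le_ordC_iff (hα : BddAbove (Set.range α)) {k m : ℕ} :
    m ≤ ordC α k ↔ ∃ s : Finset ℕ, s.card = k + 1 ∧ ∀ i ∈ s, m ≤ α i := by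
  let S : Set ℕ := {m | ∃ s : Finset ℕ, s.card = k + 1 ∧ ∀ i ∈ s, m ≤ α i}
  have hne : S.Nonempty := ⟨0, Finset.range (k + 1), by simp, by simp⟩
  have hbdd : BddAbove S := by
    obtain ⟨C, hC⟩ := hα
    refine ⟨C, ?_⟩
    rintro m ⟨s, hcard, hs⟩
    obtain ⟨i, hi⟩ : s.Nonempty := Finset.card_pos.mp (hcard ▸ k.succ_pos)
    exact (hs i hi).trans (hC ⟨i, rfl⟩)
  refine ⟨fun hm ↦ ?_, fun hm ↦ le_csSup hbdd hm⟩
  obtain ⟨s, hcard, hs⟩ := Nat.sSup_mem hne hbdd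
  exact ⟨s, hcard, fun i hi ↦ hm.trans (hs i hi)⟩

theorem exists_ge_ordC_le (hα : BddAbove (Set.range α)) (k : ℕ) : ∃ i ≥ k, ordC α k ≤ α i := by
  obtain ⟨s, hcard, hs⟩ := (le_ordC_iff hα).mp (le_refl (ordC α k))
  obtain ⟨i, his, hik⟩ : ∃ i ∈ s, i ∉ Finset.range k :=
    Finset.exists_mem_notMem_of_card_lt_card (by simp [hcard])
  exact ⟨i, by simpa using hik, hs i his⟩

theorem exists_le_le_ordC (hα : BddAbove (Set.range α)) (k : ℕ) : ∃ i ≤ k, α i ≤ ordC α k := by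
  by_contra! h
  have : ordC α k + 1 ≤ ordC α k :=
    (le_ordC_iff hα).mpr ⟨Finset.range (k + 1), Finset.card_range _,
      fun i hi ↦ h i (Finset.mem_range_succ_iff.mp hi)⟩
  exact this.not_gt (Nat.lt_succ_self _)

end Ord

section Floor

variable {K : Type*} [Field K] [LinearOrder K] [IsStrictOrderedRing K] [FloorSemiring K]
  {a x : K} {i : ℕ}

theorem exists_le_floor_mul_eq (ha : 0 < a) (hx : 0 ≤ x) (hi : i ≤ ⌊a * x⌋₊) :
    ∃ y, 0 ≤ y ∧ y ≤ x ∧ ⌊a * y⌋₊ = i := by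
  refine ⟨i / a, by positivity, ?_, by rw [mul_div_cancel₀ _ ha.ne', Nat.floor_natCast]⟩
  exact (div_le_iff₀' ha).mpr ((Nat.le_floor_iff (by positivity)).mp hi)

theorem exists_ge_floor_mul_eq (ha : 0 < a) (hi : ⌊a * x⌋₊ ≤ i) :
    ∃ y ≥ x, ⌊a * y⌋₊ = i := by
  refine ⟨max x (i / a), le_max_left _ _, ?_⟩
  rw [mul_max_of_nonneg _ _ ha.le, mul_div_cancel₀ _ ha.ne', Nat.floor_mono.map_max,
    Nat.floor_natCast, max_eq_right hi]

end Floor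

section Boundary

variable {n : ℕ} {a : ℝ} {α : ℕ → ℕ} {f : ℝ → ℝ} {x : ℝ}

theorem rescaledBoundary_le_rescaledBoundary_iff (hn : 0 < n) (ha : 0 < a) {l l' : ℕ → ℕ}
    {y : ℝ} :
    rescaledBoundary n a l x ≤ rescaledBoundary n a l' y ↔ l ⌊a * x⌋₊ ≤ l' ⌊a * y⌋₊ := by
  have hc : 0 < a / n := by positivity
  rw [rescaledBoundary, rescaledBoundary, mul_le_mul_iff_right₀ hc, Nat.cast_le]

theorem exists_ge_rescaledBoundary_ordC_le (hn : 0 < n) (ha : 0 < a)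
    (hα : BddAbove (Set.range α)) (x : ℝ) :
    ∃ y ≥ x, rescaledBoundary n a (ordC α) x ≤ rescaledBoundary n a α y := by
  obtain ⟨i, hki, hi⟩ := exists_ge_ordC_le hα ⌊a * x⌋₊
  obtain ⟨y, hxy, rfl⟩ := exists_ge_floor_mul_eq ha hki
  exact ⟨y, hxy, (rescaledBoundary_le_rescaledBoundary_iff hn ha).mpr hi⟩

theorem exists_le_rescaledBoundary_le_ordC (hn : 0 < n) (ha : 0 < a)
    (hα : BddAbove (Set.range α)) (hx : 0 ≤ x) :
    ∃ y, 0 ≤ y ∧ y ≤ x ∧ rescaledBoundary n a α y ≤ rescaledBoundary n a (ordC α) x := by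
  obtain ⟨i, hik, hi⟩ := exists_le_le_ordC hα ⌊a * x⌋₊
  obtain ⟨y, hy, hyx, rfl⟩ := exists_le_floor_mul_eq ha hx hik
  exact ⟨y, hy, hyx, (rescaledBoundary_le_rescaledBoundary_iff hn ha).mpr hi⟩

theorem abs_rescaledBoundary_ordC_sub_le (hn : 0 < n) (ha : 0 < a)
    (hα : BddAbove (Set.range α)) (hf : AntitoneOn f (Set.Ici 0)) {M : ℝ}
    (hM : ∀ y, 0 ≤ y → |rescaledBoundary n a α y - f y| ≤ M) (hx : 0 ≤ x) :
    |rescaledBoundary n a (ordC α) x - f x| ≤ M := by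
  refine abs_sub_le_iff.mpr ⟨?_, ?_⟩
  · obtain ⟨y, hxy, hle⟩ := exists_ge_rescaledBoundary_ordC_le hn ha hα x
    have hy : 0 ≤ y := hx.trans hxy
    calc rescaledBoundary n a (ordC α) x - f x
        ≤ rescaledBoundary n a α y - f y := sub_le_sub hle (hf hx hy hxy)
      _ ≤ M := (abs_sub_le_iff.mp (hM y hy)).1
  · obtain ⟨y, hy, hyx, hle⟩ := exists_le_rescaledBoundary_le_ordC hn ha hα hx
    calc f x - rescaledBoundary n a (ordC α) x
        ≤ f y - rescaledBoundary n a α y := sub_le_sub (hf hy hx hyx) hle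
      _ ≤ M := (abs_sub_le_iff.mp (hM y hy)).2

theorem bddAbove_range_abs_rescaledBoundary_sub (n : ℕ) (a : ℝ) (hα : BddAbove (Set.range α))
    (hf : AntitoneOn f (Set.Ici 0)) (hf_bdd : BddBelow (f '' Set.Ici 0)) :
    BddAbove (Set.range fun x : NNReal ↦ |rescaledBoundary n a α x - f x|) := by
  obtain ⟨C, hC⟩ := hα
  obtain ⟨m, hm⟩ := hf_bdd
  refine ⟨|a / n| * C + max |m| |f 0|, ?_⟩
  rintro _ ⟨x, rfl⟩
  have hx : (0 : ℝ) ≤ x := x.coe_nonneg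
  have hboundary : |rescaledBoundary n a α x| ≤ |a / n| * C := by
    rw [rescaledBoundary, abs_mul, Nat.abs_cast]
    gcongr
    exact hC ⟨_, rfl⟩
  have hfx : |f x| ≤ max |m| |f 0| :=
    abs_le_max_abs_abs (hm ⟨x, hx, rfl⟩) (hf Set.self_mem_Ici hx hx)
  exact (abs_sub _ _).trans (add_le_add hboundary hfx)

end Boundary

theorem sorting_decreases_sup_distance_general {n : ℕ} (hn : 0 < n) {a : ℝ} (ha : 0 < a)
    {α : ℕ → ℕ} (hα : BddAbove (Set.range α)) {f : ℝ → ℝ} (hf : AntitoneOn f (Set.Ici 0))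
    (hf_bdd : BddBelow (f '' Set.Ici 0)) :
    (⨆ x : NNReal, |rescaledBoundary n a (ordC α) x - f x|) ≤
      ⨆ x : NNReal, |rescaledBoundary n a α x - f x| := by
  have hbdd := bddAbove_range_abs_rescaledBoundary_sub n a hα hf hf_bdd
  exact ciSup_le fun x ↦ abs_rescaledBoundary_ordC_sub_le hn ha hα hf
    (fun y hy ↦ le_ciSup hbdd ⟨y, hy⟩) x.coe_nonneg

theorem sorting_decreases_sup_distance
    (n : ℕ) (hn : 0 < n) (α : ℕ → ℕ)
    (hfin : (Function.support α).Finite) (hsum : ∑ᶠ i, α i = n)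
    (a : ℝ) (ha : 0 < a)
    (f : ℝ → ℝ)
    (hf_nonneg : ∀ x : ℝ, 0 ≤ x → 0 ≤ f x)
    (hf_anti : AntitoneOn f (Set.Ici 0))
    (hf_rc : ∀ x : ℝ, 0 ≤ x → ContinuousWithinAt f (Set.Ici x) x)
    (hf_lim : Tendsto f atTop (nhds 0)) :
    (⨆ x : NNReal, |rescaledBoundary n a (ordC α) x - f x|) ≤
      ⨆ x : NNReal, |rescaledBoundary n a α x - f x| := by
  have hα : BddAbove (Set.range α) :=
    (((hfin.image α).insert 0).subset (Function.range_subset_insert_image_support α)).bddAbove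
  exact sorting_decreases_sup_distance_general hn ha hα hf_anti
    ⟨0, Set.forall_mem_image.mpr hf_nonneg⟩
end

section
/- For each positive integer n let p = p(n) ∈ (0,1) satisfy p → 0 and p/((log n)/n) → ∞ as n → ∞, and let m = m(n) be a positive integer with m > (ε²/(2+ε))·n. Fix ε > 0 and δ ∈ (0,1). Model m rounds of the card-based stochastic Bulgarian solitaire as follows: the initial configuration is any weak composition λ⁰ of n (an assignment of the n cards to initial piles), and (X_{i,t}), for 1 ≤ i ≤ n and 1 ≤ t ≤ m, are i.i.d. Bernoulli(p) random variables, where X_{i,t} = 1 means card i is picked into the new pile in round t. After m rounds form the weak composition α of n whose k-th part is: for 1 ≤ k ≤ m, α_k = #{i : X_{i,m−k+1} = 1 and X_{i,s} = 0 for all m−k+1 < s ≤ m}; and for k > m, α_k = #{cards i assigned to initial pile k−m of λ⁰ with X_{i,s} = 0 for all 1 ≤ s ≤ m}. Let λ^(m) = ord α be the integer partition obtained by sorting α. Then there exists N such that for all n ≥ N and every initial configuration λ⁰, P( sup_{x≥0} |∂^{1/p} λ^(m)(x) − e^{−x}| ≤ ε ) ≥ 1 − exp(−(ε²/(2+ε))·n·p·(1−δ)).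 -/
open Filter MeasureTheory ProbabilityTheory

/-!
Card `i` lies in the pile formed `j` rounds ago iff it was picked in that round and in none of the
`j` later ones, an event of probability `p (1 - p) ^ j`. Hence the size of that pile is a sum of
independent indicators with mean `n p (1 - p) ^ j ≤ n p`, and a Poisson-type Chernoff bound shows
that it deviates from its mean by more than `e n p` with probability at most
`2 exp (-(e² / (2 + e)) n p)`. The union bound over the `J = ⌊ε² / (2 + ε) * n⌋` youngest piles,
together with the probability at most `n (1 - p) ^ J` that some card escapes the last `J` rounds,
controls all piles simultaneously. Sorting preserves a uniform distance to the decreasing profile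
`(1 - p) ^ j`, which after rescaling is within `3 p` of `exp (-x)`; so the argument is run with
`e = ε - 3 p`. Since `p` dominates `log n / n`, the factor `exp (δ n p ε² / (2 + ε))` conceded in
the claim absorbs both the polynomial factors of the union bound and the loss from `ε` to `e`.
-/

section PoissonTails

variable {Ω : Type*} [MeasurableSpace Ω] {P : Measure Ω} {μ ν e : ℝ}

-- At `μ = ν` this is Bennett's exponent `(1 + e) log (1 + e) - e ≥ e² / (2 + e)`; the left-hand
-- side is increasing in `μ` because `log (1 + e) ≤ e`.
lemma mul_sub_log_one_add_mul_le (he : 0 ≤ e) (hν : 0 ≤ ν) (hμν : μ ≤ ν) :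
    μ * e - Real.log (1 + e) * (μ + e * ν) ≤ -(e ^ 2 / (2 + e)) * ν := by
  have bennett : e ^ 2 / (2 + e) ≤ (1 + e) * Real.log (1 + e) - e := by
    have hsplit : e ^ 2 / (2 + e) = (1 + e) * (2 * e / (e + 2)) - e := by
      field_simp
      ring
    rw [hsplit]
    gcongr
    exact Real.le_log_one_add_of_nonneg he
  have hlog : Real.log (1 + e) ≤ e := by
    linarith [Real.log_le_sub_one_of_pos (show 0 < 1 + e by linarith)]
  calc μ * e - Real.log (1 + e) * (μ + e * ν)
      = μ * (e - Real.log (1 + e)) - Real.log (1 + e) * (e * ν) := by ring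
    _ ≤ ν * (e - Real.log (1 + e)) - Real.log (1 + e) * (e * ν) := by
      gcongr
    _ = -((1 + e) * Real.log (1 + e) - e) * ν := by ring
    _ ≤ -(e ^ 2 / (2 + e)) * ν := by gcongr

-- Reduces to the upper-tail exponent, because `2 log (1 + e) ≤ (1 + e) - (1 + e)⁻¹`.
lemma log_one_add_mul_sub_le (he : 0 ≤ e) (hμ : 0 ≤ μ) (hμν : μ ≤ ν) :
    μ * ((1 + e)⁻¹ - 1) + Real.log (1 + e) * (μ - e * ν) ≤ -(e ^ 2 / (2 + e)) * ν := by
  have hsinh := Real.self_le_sinh_iff.2 (Real.log_nonneg (show 1 ≤ 1 + e by linarith))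
  rw [Real.sinh_eq, Real.exp_neg, Real.exp_log (by linarith)] at hsinh
  have hμsinh : μ * (2 * Real.log (1 + e)) ≤ μ * (1 + e - (1 + e)⁻¹) := by
    gcongr
    linarith
  linarith [mul_sub_log_one_add_mul_le he (hμ.trans hμν) hμν]

theorem measureReal_le_abs_sub_of_mgf_le_poisson [IsFiniteMeasure P] {S : Ω → ℝ}
    (hmgf : ∀ t, mgf S P t ≤ Real.exp (μ * (Real.exp t - 1)))
    (hint : ∀ t, Integrable (fun ω => Real.exp (t * S ω)) P)
    (he : 0 ≤ e) (hμ : 0 ≤ μ) (hμν : μ ≤ ν) :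
    P.real {ω | e * ν ≤ |S ω - μ|} ≤ 2 * Real.exp (-(e ^ 2 / (2 + e)) * ν) := by
  have hlog : 0 ≤ Real.log (1 + e) := Real.log_nonneg (by linarith)
  have hexp : Real.exp (Real.log (1 + e)) = 1 + e := Real.exp_log (by linarith)
  have upper : P.real {ω | μ + e * ν ≤ S ω} ≤ Real.exp (-(e ^ 2 / (2 + e)) * ν) := by
    refine (measure_ge_le_exp_mul_mgf _ hlog (hint _)).trans ?_
    grw [hmgf, ← Real.exp_add, ← mul_sub_log_one_add_mul_le he (hμ.trans hμν) hμν, hexp]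
    exact le_of_eq (by ring_nf)
  have lower : P.real {ω | S ω ≤ μ - e * ν} ≤ Real.exp (-(e ^ 2 / (2 + e)) * ν) := by
    refine (measure_le_le_exp_mul_mgf _ (neg_nonpos.2 hlog) (hint _)).trans ?_
    grw [hmgf, ← Real.exp_add, ← log_one_add_mul_sub_le he hμ hμν, Real.exp_neg, hexp]
    exact le_of_eq (by ring_nf)
  calc P.real {ω | e * ν ≤ |S ω - μ|}
      ≤ P.real ({ω | μ + e * ν ≤ S ω} ∪ {ω | S ω ≤ μ - e * ν}) := by
        refine measureReal_mono fun ω (hω : e * ν ≤ |S ω - μ|) => ?_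
        exact (le_abs.1 hω).imp le_sub_iff_add_le'.1 fun h => show S ω ≤ μ - e * ν by linarith
    _ ≤ 2 * Real.exp (-(e ^ 2 / (2 + e)) * ν) :=
        (measureReal_union_le _ _).trans (by linarith)

lemma mgf_indicator_one_le [IsProbabilityMeasure P] {A : Set Ω} (hA : MeasurableSet A) (t : ℝ) :
    mgf (A.indicator fun _ => 1) P t ≤ Real.exp (P.real A * (Real.exp t - 1)) := by
  have hexp : (fun ω => Real.exp (t * A.indicator (fun _ => 1) ω)) =
      fun ω => A.indicator (fun _ => Real.exp t - 1) ω + 1 := by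
    funext ω
    by_cases hω : ω ∈ A <;> simp [hω]
  calc mgf (A.indicator fun _ => 1) P t
      = P.real A * (Real.exp t - 1) + 1 := by
        rw [mgf, hexp, integral_add ((integrable_const _).indicator hA) (integrable_const _),
          integral_indicator_const _ hA, integral_const, probReal_univ, smul_eq_mul, one_smul]
    _ ≤ Real.exp (P.real A * (Real.exp t - 1)) := Real.add_one_le_exp _

theorem measureReal_le_abs_ncard_sub_le [IsProbabilityMeasure P] {ι : Type*} [Fintype ι]
    {A : ι → Set Ω} (hA : ∀ i, MeasurableSet (A i)) (hindep : iIndepSet A P) (he : 0 ≤ e)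
    (hν : ∑ i, P.real (A i) ≤ ν) :
    P.real {ω | e * ν ≤ |({i | ω ∈ A i}.ncard : ℝ) - ∑ i, P.real (A i)|} ≤
      2 * Real.exp (-(e ^ 2 / (2 + e)) * ν) := by
  classical
  set S : Ω → ℝ := ∑ i, (A i).indicator fun _ => 1 with hS
  have hmeas : ∀ i, Measurable ((A i).indicator fun _ => (1 : ℝ)) :=
    fun i => measurable_const.indicator (hA i)
  have hcount : ∀ ω, ({i | ω ∈ A i}.ncard : ℝ) = S ω := fun ω => by
    simp [hS, Finset.sum_apply, Set.ncard_eq_toFinset_card', Set.indicator_apply]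
  have hmgf : ∀ t, mgf S P t ≤ Real.exp ((∑ i, P.real (A i)) * (Real.exp t - 1)) := fun t => by
    rw [hindep.iIndepFun_indicator.mgf_sum hmeas, Finset.sum_mul, Real.exp_sum]
    exact Finset.prod_le_prod (fun _ _ => mgf_nonneg) fun i _ => mgf_indicator_one_le (hA i) t
  have hbound : ∀ ω, S ω ∈ Set.Icc 0 (Fintype.card ι : ℝ) := fun ω => by
    rw [← hcount, ← Nat.card_eq_fintype_card]
    exact ⟨by positivity, mod_cast Set.ncard_le_card _⟩
  have hint : ∀ t, Integrable (fun ω => Real.exp (t * S ω)) P := fun t =>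
    integrable_exp_mul_of_mem_Icc (by fun_prop) (ae_of_all _ hbound)
  simp only [hcount]
  exact measureReal_le_abs_sub_of_mgf_le_poisson hmgf hint he (by positivity) hν

end PoissonTails

section IndependentPatterns

variable {Ω β I ι κ : Type*}

lemma setOf_forall_mem_eq_iInter (X : I → Ω → β) (S : Finset I) (v : I → β) :
    {ω | ∀ a ∈ S, X a ω = v a} = ⋂ a ∈ S, X a ⁻¹' {v a} := by
  ext
  simp

variable [MeasurableSpace Ω] [MeasurableSpace β] [MeasurableSingletonClass β] {P : Measure Ω}

lemma measure_setOf_forall_mem_eq {X : I → Ω → β} (hX : iIndepFun X P) (S : Finset I)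
    (v : I → β) : P {ω | ∀ a ∈ S, X a ω = v a} = ∏ a ∈ S, P {ω | X a ω = v a} := by
  rw [setOf_forall_mem_eq_iInter]
  exact hX.measure_inter_preimage_eq_mul S fun _ _ => measurableSet_singleton _

lemma measurableSet_setOf_forall_mem_eq {X : I → Ω → β} (hX : ∀ a, Measurable (X a))
    (S : Finset I) (v : I → β) : MeasurableSet {ω | ∀ a ∈ S, X a ω = v a} := by
  rw [setOf_forall_mem_eq_iInter]
  exact S.measurableSet_biInter fun a _ => hX a (measurableSet_singleton _)

lemma iIndepSet_setOf_forall_mem_eq {X : ι × κ → Ω → β} (hmeas : ∀ a, Measurable (X a))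
    (hX : iIndepFun X P) (T : Finset κ) (v : κ → β) :
    iIndepSet (fun i => {ω | ∀ s ∈ T, X (i, s) ω = v s}) P := by
  refine (iIndepSet_iff_meas_biInter fun i =>
    measurableSet_setOf_forall_mem_eq (fun s => hmeas (i, s)) T v).2 fun S => ?_
  have hrow : ∀ i, P {ω | ∀ s ∈ T, X (i, s) ω = v s} = ∏ s ∈ T, P {ω | X (i, s) ω = v s} :=
    fun i => measure_setOf_forall_mem_eq
      (hX.precomp (g := fun s => (i, s)) (Prod.mk_right_injective i)) T v
  calc P (⋂ i ∈ S, {ω | ∀ s ∈ T, X (i, s) ω = v s})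
      = P {ω | ∀ a ∈ S ×ˢ T, X a ω = v a.2} := by
        congr 1
        ext ω
        simp only [Set.mem_iInter, Set.mem_ofPred_eq, Finset.mem_product, Prod.forall]
        exact ⟨fun h i s his => h i his.1 s his.2, fun h i hi s hs => h i s ⟨hi, hs⟩⟩
    _ = ∏ i ∈ S, P {ω | ∀ s ∈ T, X (i, s) ω = v s} := by
        simp only [measure_setOf_forall_mem_eq hX (S ×ˢ T) fun a => v a.2, Finset.prod_product,
          hrow]

end IndependentPatterns

/-- `X` is a family of independent `{0, 1}`-valued random variables, each equal to `1` with
probability `p`: the indicators of the events that a given card is picked in a given round. The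
values are exactly, not just almost surely, `0` or `1`. -/
structure IsIIDBernoulli {I Ω : Type*} [MeasurableSpace Ω] (X : I → Ω → ℕ) (p : ℝ)
    (P : Measure Ω) : Prop where
  measurable (a : I) : Measurable (X a)
  eq_zero_or_one (a : I) (ω : Ω) : X a ω = 0 ∨ X a ω = 1
  measureReal_eq_one (a : I) : P.real {ω | X a ω = 1} = p
  indep : iIndepFun X P

namespace IsIIDBernoulli

variable {I J Ω : Type*} [MeasurableSpace Ω] {P : Measure Ω} {X : I → Ω → ℕ} {p : ℝ}

lemma precomp (h : IsIIDBernoulli X p P) {g : J → I} (hg : g.Injective) :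
    IsIIDBernoulli (X ∘ g) p P where
  measurable a := h.measurable (g a)
  eq_zero_or_one a := h.eq_zero_or_one (g a)
  measureReal_eq_one a := h.measureReal_eq_one (g a)
  indep := h.indep.precomp (g := g) hg

lemma row {ι κ : Type*} {X : ι × κ → Ω → ℕ} (h : IsIIDBernoulli X p P) (i : ι) :
    IsIIDBernoulli (fun s => X (i, s)) p P :=
  h.precomp (Prod.mk_right_injective i)

variable [IsProbabilityMeasure P]

lemma measureReal_eq_zero (h : IsIIDBernoulli X p P) (a : I) :
    P.real {ω | X a ω = 0} = 1 - p := by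
  have hcompl : {ω | X a ω = 0} = {ω | X a ω = 1}ᶜ := by
    ext ω
    rcases h.eq_zero_or_one a ω with h₀ | h₁ <;> simp [*]
  have hmeas : MeasurableSet {ω | X a ω = 1} := h.measurable a (measurableSet_singleton 1)
  rw [hcompl, probReal_compl_eq_one_sub hmeas, h.measureReal_eq_one]

lemma measureReal_forall_mem_eq_zero (h : IsIIDBernoulli X p P) (T : Finset I) :
    P.real {ω | ∀ a ∈ T, X a ω = 0} = (1 - p) ^ T.card := by
  rw [measureReal_def, measure_setOf_forall_mem_eq h.indep T fun _ => 0, ENNReal.toReal_prod]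
  exact Finset.prod_eq_pow_card fun a _ => h.measureReal_eq_zero a

lemma measureReal_forall_mem_insert_eq_single [DecidableEq I] (h : IsIIDBernoulli X p P) {a : I}
    {T : Finset I} (ha : a ∉ T) :
    P.real {ω | ∀ b ∈ insert a T, X b ω = Pi.single (M := fun _ => ℕ) a 1 b} =
      p * (1 - p) ^ T.card := by
  rw [measureReal_def, measure_setOf_forall_mem_eq h.indep, ENNReal.toReal_prod,
    Finset.prod_insert ha]
  congr 1
  · simpa [measureReal_def] using h.measureReal_eq_one a
  · refine Finset.prod_eq_pow_card fun b hb => ?_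
    simpa [measureReal_def, ne_of_mem_of_not_mem hb ha] using h.measureReal_eq_zero b

end IsIIDBernoulli

section ExponentialApproximation

variable {p a b : ℝ}

lemma exp_neg_sub_exp_neg_le (ha : 0 ≤ a) (hab : a ≤ b) :
    Real.exp (-a) - Real.exp (-b) ≤ b - a := by
  have hle : Real.exp (-a) * (b - a) ≤ 1 * (b - a) :=
    mul_le_mul_of_nonneg_right (Real.exp_le_one_iff.2 (by linarith)) (by linarith)
  have hmul : Real.exp (-a) * (1 - (b - a)) ≤ Real.exp (-a) * Real.exp (-(b - a)) := by
    gcongr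
    exact Real.one_sub_le_exp_neg _
  rw [← Real.exp_add, neg_add_eq_sub, neg_sub, sub_right_comm, sub_self, zero_sub] at hmul
  linarith

lemma one_sub_pow_le_exp_neg_mul (hp : p ≤ 1) (k : ℕ) :
    (1 - p) ^ k ≤ Real.exp (-(k * p)) := by
  calc (1 - p) ^ k ≤ Real.exp (-p) ^ k :=
        pow_le_pow_left₀ (by linarith) (Real.one_sub_le_exp_neg p) k
    _ = Real.exp (-(k * p)) := by rw [← Real.exp_nat_mul, mul_neg]

lemma exp_neg_mul_sub_le_one_sub_pow (hp₀ : 0 ≤ p) (hp : p ≤ 1 / 2) (k : ℕ) :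
    Real.exp (-(k * p)) - 2 * p ≤ (1 - p) ^ k := by
  have hone_sub : Real.exp (-(p + 2 * p ^ 2)) ≤ 1 - p := by
    rw [Real.exp_neg, inv_le_comm₀ (Real.exp_pos _) (by linarith)]
    calc (1 - p)⁻¹ ≤ p + 2 * p ^ 2 + 1 := by
          rw [inv_le_iff_one_le_mul₀ (by linarith)]
          nlinarith [sq_nonneg p]
      _ ≤ Real.exp (p + 2 * p ^ 2) := Real.add_one_le_exp _
  have hloss : k * p * Real.exp (-(k * p)) ≤ 1 :=
    (Real.mul_exp_neg_le_exp_neg_one _).trans (Real.exp_le_one_iff.2 (by norm_num))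
  calc Real.exp (-(k * p)) - 2 * p
      ≤ Real.exp (-(k * p)) - 2 * p * (k * p * Real.exp (-(k * p))) := by
        refine sub_le_sub_left ?_ _
        exact mul_le_of_le_one_right (by positivity) hloss
    _ = Real.exp (-(k * p)) * (1 - 2 * p * (k * p)) := by ring
    _ ≤ Real.exp (-(k * p)) * Real.exp (-(2 * p * (k * p))) := by
        gcongr
        exact Real.one_sub_le_exp_neg _
    _ = Real.exp (-(p + 2 * p ^ 2)) ^ k := by
        rw [← Real.exp_nat_mul, ← Real.exp_add]
        ring_nf
    _ ≤ (1 - p) ^ k := pow_le_pow_left₀ (Real.exp_pos _).le hone_sub k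

lemma abs_one_sub_pow_floor_sub_exp_neg_le (hp₀ : 0 < p) (hp : p ≤ 1 / 2) {x : ℝ} (hx : 0 ≤ x) :
    |(1 - p) ^ ⌊1 / p * x⌋₊ - Real.exp (-x)| ≤ 3 * p := by
  set k := ⌊1 / p * x⌋₊
  have hkx : k * p ≤ x := by
    rw [← le_div_iff₀ hp₀, div_eq_inv_mul, ← one_div]
    exact Nat.floor_le (by positivity)
  have hxk : x ≤ (k + 1) * p := by
    rw [← div_le_iff₀ hp₀, div_eq_inv_mul, ← one_div]
    exact (Nat.lt_floor_add_one _).le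
  have hupper := one_sub_pow_le_exp_neg_mul (by linarith : p ≤ 1) k
  have hlower := exp_neg_mul_sub_le_one_sub_pow hp₀.le hp k
  have hmono : Real.exp (-x) ≤ Real.exp (-(k * p)) := Real.exp_le_exp.2 (by linarith)
  have hround := exp_neg_sub_exp_neg_le (by positivity) hkx
  rw [abs_le]
  constructor <;> linarith

lemma one_sub_pow_floor_le (hp₀ : 0 ≤ p) (hp : p ≤ 1) (x : ℝ) :
    (1 - p) ^ ⌊x⌋₊ ≤ Real.exp 1 * Real.exp (-(x * p)) := by
  have hxp : x * p ≤ (⌊x⌋₊ + 1) * p := by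
    gcongr
    exact (Nat.lt_floor_add_one x).le
  calc (1 - p) ^ ⌊x⌋₊ ≤ Real.exp (-(⌊x⌋₊ * p)) := one_sub_pow_le_exp_neg_mul hp _
    _ ≤ Real.exp (1 + -(x * p)) := Real.exp_le_exp.2 (by linarith)
    _ = Real.exp 1 * Real.exp (-(x * p)) := Real.exp_add _ _

end ExponentialApproximation

section DecreasingRearrangement

variable {l : ℕ → ℕ}

lemma bddAbove_setOf_forall_mem_le (hl : BddAbove (Set.range l)) (k : ℕ) :
    BddAbove {m : ℕ | ∃ s : Finset ℕ, s.card = k + 1 ∧ ∀ i ∈ s, m ≤ l i} := by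
  obtain ⟨B, hB⟩ := hl
  refine ⟨B, ?_⟩
  rintro m ⟨s, hs, hm⟩
  obtain ⟨i, hi⟩ := Finset.card_pos.1 (show 0 < s.card by simp [hs])
  exact (hm i hi).trans (hB ⟨i, rfl⟩)

lemma exists_le_and_apply_le_ordC (hl : BddAbove (Set.range l)) (k : ℕ) :
    ∃ i ≤ k, l i ≤ ordC l k := by
  obtain ⟨i, hi, hmin⟩ := Finset.exists_min_image (Finset.range (k + 1)) l ⟨0, by simp⟩
  exact ⟨i, Finset.mem_range_succ_iff.1 hi,
    le_csSup (bddAbove_setOf_forall_mem_le hl k) ⟨_, Finset.card_range _, hmin⟩⟩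

lemma exists_ge_and_ordC_le_apply (hl : BddAbove (Set.range l)) (k : ℕ) :
    ∃ i, k ≤ i ∧ ordC l k ≤ l i := by
  have hne : {m : ℕ | ∃ s : Finset ℕ, s.card = k + 1 ∧ ∀ i ∈ s, m ≤ l i}.Nonempty :=
    ⟨0, Finset.range (k + 1), by simp⟩
  obtain ⟨s, hs, hle⟩ := Nat.sSup_mem hne (bddAbove_setOf_forall_mem_le hl k)
  obtain ⟨i, his, hki⟩ := Finset.exists_mem_notMem_of_card_lt_card
    (show (Finset.range k).card < s.card by simp [hs])
  exact ⟨i, by simpa using hki, hle i his⟩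

-- The entry `ordC l k` lies between an entry of `l` of index at most `k` and one of index at
-- least `k`, so sorting cannot increase the distance to a decreasing profile.
lemma abs_mul_ordC_sub_le {f : ℕ → ℝ} {a e : ℝ} (hl : BddAbove (Set.range l))
    (hf : Antitone f) (ha : 0 ≤ a) (h : ∀ j, |a * l j - f j| ≤ e) (k : ℕ) :
    |a * ordC l k - f k| ≤ e := by
  obtain ⟨i, hik, hi⟩ := exists_le_and_apply_le_ordC hl k
  obtain ⟨j, hkj, hj⟩ := exists_ge_and_ordC_le_apply hl k
  have hlower : a * l i ≤ a * ordC l k := by gcongr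
  have hupper : a * ordC l k ≤ a * l j := by gcongr
  rw [abs_le]
  constructor
  · linarith [(abs_le.1 (h i)).1, hf hik]
  · linarith [(abs_le.1 (h j)).2, hf hkj]

lemma abs_rescaledBoundary_ordC_sub_exp_neg_le {n : ℕ} {p e : ℝ}
    (hl : BddAbove (Set.range l)) (hp₀ : 0 < p) (hp : p ≤ 1 / 2)
    (h : ∀ j, |1 / p / n * l j - (1 - p) ^ j| ≤ e) {x : ℝ} (hx : 0 ≤ x) :
    |rescaledBoundary n (1 / p) (ordC l) x - Real.exp (-x)| ≤ e + 3 * p := by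
  have hgeom : Antitone fun j : ℕ => (1 - p) ^ j :=
    fun _ _ hij => pow_le_pow_of_le_one (by linarith) (by linarith) hij
  exact (abs_sub_le _ _ _).trans (add_le_add
    (abs_mul_ordC_sub_le hl hgeom (by positivity) h _)
    (abs_one_sub_pow_floor_sub_exp_neg_le hp₀ hp hx))

end DecreasingRearrangement

section Solitaire

variable {ι : Type*} {M : ℕ}

/-- The weak composition reached after `M` rounds from the initial configuration `c`, when card
`i` is picked in round `t` iff `x (i, t) = 1`. Parts and rounds are 0-indexed: part `j < M` is what
is left of the pile formed in round `M - 1 - j`, and part `M + k` what is left of the initial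
pile `k`. -/
noncomputable def pileComposition (x : ι × Fin M → ℕ) (c : ι → ℕ) (j : ℕ) : ℕ :=
  if hj : j < M then
    Set.ncard {i | x (i, ⟨M - 1 - j, by omega⟩) = 1 ∧
      ∀ s : Fin M, M - 1 - j < (s : ℕ) → x (i, s) = 0}
  else
    Set.ncard {i | c i = j - M ∧ ∀ s : Fin M, x (i, s) = 0}

/-- The last `J` of the `M` rounds; all of them if `M < J`. -/
def lastRounds (M J : ℕ) : Finset (Fin M) := {s | s.rev < J}

lemma card_lastRounds (M J : ℕ) : (lastRounds M J).card = min M J := by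
  have hmap : lastRounds M J = ({j | j < J} : Finset (Fin M)).map Fin.revPerm.toEmbedding := by
    ext
    simp [lastRounds]
  rw [hmap, Finset.card_map, Fin.card_filter_val_lt]

lemma bddAbove_range_pileComposition [Finite ι] (x : ι × Fin M → ℕ) (c : ι → ℕ) :
    BddAbove (Set.range (pileComposition x c)) := by
  refine ⟨Nat.card ι, ?_⟩
  rintro _ ⟨j, rfl⟩
  rw [pileComposition]
  split_ifs <;> exact Set.ncard_le_card _

lemma pileComposition_eq_zero {x : ι × Fin M → ℕ} (c : ι → ℕ) {J j : ℕ}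
    (hpicked : ∀ i, ∃ s ∈ lastRounds M J, x (i, s) ≠ 0) (hJj : J ≤ j) :
    pileComposition x c j = 0 := by
  simp only [lastRounds, Finset.mem_filter_univ, Fin.val_rev] at hpicked
  have hempty : ∀ q : ι → Prop, (∀ i, q i → ∀ s : Fin M, M - (s + 1) < J → x (i, s) = 0) →
      Set.ncard {i | q i} = 0 := fun q hq => by
    have hnot : ∀ i, ¬ q i := fun i hi =>
      let ⟨s, hs, hne⟩ := hpicked i
      hne (hq i hi s hs)
    simp [hnot]
  rw [pileComposition]
  split_ifs with hj
  · exact hempty _ fun i hi s hs => hi.2 s (by omega)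
  · exact hempty _ fun i hi s _ => hi.2 s

lemma pileComposition_eq_ncard_forall_mem_insert (x : ι × Fin M → ℕ) (c : ι → ℕ) (j : Fin M) :
    pileComposition x c j = Set.ncard {i | ∀ s ∈ insert j.rev (Finset.Ioi j.rev),
      x (i, s) = Pi.single (M := fun _ => ℕ) j.rev 1 s} := by
  have hval : M - 1 - j = (j.rev : ℕ) := by rw [Fin.val_rev]; omega
  simp only [pileComposition, j.isLt, dif_pos, hval, Finset.forall_mem_insert,
    Pi.single_eq_same, Finset.mem_Ioi, Fin.lt_def]
  congr! 5 with i s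
  refine imp_congr_right fun hs => ?_
  rw [Pi.single_eq_of_ne (Fin.ne_of_gt hs)]

variable [Fintype ι] {p e : ℝ} {J : ℕ}

lemma abs_mul_pileComposition_sub_le [Nonempty ι] (hp₀ : 0 < p) (hp : p ≤ 1)
    (hJ : (1 - p) ^ J ≤ e) {x : ι × Fin M → ℕ} {c : ι → ℕ}
    (hpicked : ∀ i, ∃ s ∈ lastRounds M J, x (i, s) ≠ 0)
    (hpile : ∀ j : Fin J, |pileComposition x c j - Fintype.card ι * (p * (1 - p) ^ (j : ℕ))| ≤
      e * (Fintype.card ι * p)) (j : ℕ) :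
    |1 / p / Fintype.card ι * pileComposition x c j - (1 - p) ^ j| ≤ e := by
  rcases lt_or_ge j J with hj | hj
  · have hscale : 1 / p / Fintype.card ι * pileComposition x c j - (1 - p) ^ j =
        (pileComposition x c j - Fintype.card ι * (p * (1 - p) ^ j)) / (Fintype.card ι * p) := by
      field_simp
    have hcard : 0 < Fintype.card ι * p := by positivity
    rw [hscale, abs_div, abs_of_pos hcard, div_le_iff₀ hcard]
    exact hpile ⟨j, hj⟩
  · rw [pileComposition_eq_zero c hpicked hj, Nat.cast_zero, mul_zero, zero_sub, abs_neg,
      abs_of_nonneg (pow_nonneg (by linarith) j)]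
    exact (pow_le_pow_of_le_one (by linarith) (by linarith) hj).trans hJ

namespace IsIIDBernoulli

variable {Ω : Type*} [MeasurableSpace Ω] {P : Measure Ω} [IsProbabilityMeasure P]
  {X : ι × Fin M → Ω → ℕ}

lemma measureReal_exists_forall_lastRounds_eq_zero_le (h : IsIIDBernoulli X p P) (hJ : J ≤ M) :
    P.real {ω | ∃ i, ∀ s ∈ lastRounds M J, X (i, s) ω = 0} ≤ Fintype.card ι * (1 - p) ^ J := by
  have hcard (i : ι) : P.real {ω | ∀ s ∈ lastRounds M J, X (i, s) ω = 0} = (1 - p) ^ J := by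
    simpa [card_lastRounds, hJ] using (h.row i).measureReal_forall_mem_eq_zero (lastRounds M J)
  rw [Set.ofPred_exists]
  refine (measureReal_iUnion_fintype_le _).trans_eq ?_
  simp [hcard]

lemma measureReal_le_abs_pileComposition_sub_le (h : IsIIDBernoulli X p P) (c : ι → ℕ)
    (he : 0 ≤ e) (j : Fin M) :
    P.real {ω | e * (Fintype.card ι * p) ≤
      |pileComposition (X · ω) c j - Fintype.card ι * (p * (1 - p) ^ (j : ℕ))|} ≤
      2 * Real.exp (-(e ^ 2 / (2 + e)) * (Fintype.card ι * p)) := by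
  set T := insert j.rev (Finset.Ioi j.rev)
  set v : Fin M → ℕ := Pi.single j.rev 1
  have hprob (i : ι) : P.real {ω | ∀ s ∈ T, X (i, s) ω = v s} = p * (1 - p) ^ (j : ℕ) := by
    have hcard : (Finset.Ioi j.rev).card = j := by
      rw [Fin.card_Ioi, Fin.val_rev]
      omega
    rw [← hcard]
    exact (h.row i).measureReal_forall_mem_insert_eq_single (by simp)
  have hle (i : ι) : P.real {ω | ∀ s ∈ T, X (i, s) ω = v s} ≤ p := by
    rw [← h.measureReal_eq_one (i, j.rev)]
    refine measureReal_mono fun ω hω => ?_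
    simpa [v] using hω j.rev (Finset.mem_insert_self _ _)
  have hchernoff := measureReal_le_abs_ncard_sub_le
    (fun i => measurableSet_setOf_forall_mem_eq (fun s => h.measurable (i, s)) T v)
    (iIndepSet_setOf_forall_mem_eq h.measurable h.indep T v) he
    (ν := Fintype.card ι * p) ((Finset.sum_le_card_nsmul _ _ _ fun i _ => hle i).trans_eq (by simp))
  simpa only [pileComposition_eq_ncard_forall_mem_insert, Set.mem_ofPred_eq, hprob,
    Finset.sum_const, Finset.card_univ, nsmul_eq_mul] using hchernoff

lemma measureReal_exists_le_abs_pileComposition_sub_le (h : IsIIDBernoulli X p P) (c : ι → ℕ)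
    (he : 0 ≤ e) (hJ : J ≤ M) :
    P.real {ω | ∃ j : Fin J, e * (Fintype.card ι * p) ≤
      |pileComposition (X · ω) c j - Fintype.card ι * (p * (1 - p) ^ (j : ℕ))|} ≤
      J * (2 * Real.exp (-(e ^ 2 / (2 + e)) * (Fintype.card ι * p))) := by
  rw [Set.ofPred_exists]
  refine (measureReal_iUnion_fintype_le _).trans ((Finset.sum_le_card_nsmul _ _ _ fun j _ =>
    h.measureReal_le_abs_pileComposition_sub_le c he (j.castLE hJ)).trans_eq ?_)
  simp

theorem one_sub_le_measureReal_abs_rescaledBoundary_sub_exp_neg_le [Nonempty ι]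
    (h : IsIIDBernoulli X p P) (c : ι → ℕ) (hp₀ : 0 < p) (hp : p ≤ 1 / 2) (hJ : J ≤ M)
    (hJe : (1 - p) ^ J ≤ e) :
    1 - (J * (2 * Real.exp (-(e ^ 2 / (2 + e)) * (Fintype.card ι * p))) +
        Fintype.card ι * (1 - p) ^ J) ≤
      P.real {ω | ∀ x : ℝ, 0 ≤ x → |rescaledBoundary (Fintype.card ι) (1 / p)
        (ordC (pileComposition (X · ω) c)) x - Real.exp (-x)| ≤ e + 3 * p} := by
  set good := {ω | ∀ x : ℝ, 0 ≤ x → |rescaledBoundary (Fintype.card ι) (1 / p)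
    (ordC (pileComposition (X · ω) c)) x - Real.exp (-x)| ≤ e + 3 * p}
  set unpicked := {ω | ∃ i, ∀ s ∈ lastRounds M J, X (i, s) ω = 0}
  set deviant := {ω | ∃ j : Fin J, e * (Fintype.card ι * p) ≤
    |pileComposition (X · ω) c j - Fintype.card ι * (p * (1 - p) ^ (j : ℕ))|}
  have he : 0 ≤ e := (pow_nonneg (by linarith) J).trans hJe
  have hcover : Set.univ ⊆ good ∪ (deviant ∪ unpicked) := fun ω _ => by
    by_contra hω
    simp only [Set.mem_union, not_or, deviant, unpicked, Set.mem_ofPred_eq, not_exists, not_le,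
      not_forall] at hω
    refine hω.1 fun x hx => abs_rescaledBoundary_ordC_sub_exp_neg_le
      (bddAbove_range_pileComposition _ c) hp₀ hp (abs_mul_pileComposition_sub_le hp₀
        (by linarith) hJe (by simpa using hω.2.2) fun j => (hω.2.1 j).le) hx
  have hunion : 1 ≤ P.real good + (P.real deviant + P.real unpicked) :=
    calc 1 = P.real Set.univ := probReal_univ.symm
      _ ≤ P.real (good ∪ (deviant ∪ unpicked)) := measureReal_mono hcover
      _ ≤ P.real good + (P.real deviant + P.real unpicked) :=
        (measureReal_union_le _ _).trans (by gcongr; exact measureReal_union_le _ _)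
  linarith [h.measureReal_exists_forall_lastRounds_eq_zero_le hJ,
    h.measureReal_exists_le_abs_pileComposition_sub_le c he hJ]

end IsIIDBernoulli

end Solitaire

section Asymptotics

variable {p : ℕ → ℝ}

lemma eventually_mul_natCast_le_exp
    (hplog : Tendsto (fun n : ℕ => p n / (Real.log n / n)) atTop atTop) {η : ℝ} (hη : 0 < η)
    (K : ℝ) : ∀ᶠ n : ℕ in atTop, K * n ≤ Real.exp (η * (n * p n)) := by
  filter_upwards [hplog.eventually_ge_atTop (2 / η),
    tendsto_natCast_atTop_atTop.eventually_ge_atTop K, eventually_ge_atTop 2] with n hratio hK hn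
  have hn₁ : (1 : ℝ) < n := by exact_mod_cast hn
  have hlog : 0 < Real.log n := Real.log_pos hn₁
  have hexponent : 2 * Real.log n ≤ η * (n * p n) := by
    rw [le_div_iff₀ (by positivity), div_mul_div_comm, div_le_iff₀ (by positivity)] at hratio
    linarith
  calc K * n ≤ n * n := by gcongr
    _ = Real.exp (2 * Real.log n) := by
        rw [two_mul, Real.exp_add, Real.exp_log (by positivity)]
    _ ≤ Real.exp (η * (n * p n)) := Real.exp_le_exp.2 hexponent

variable {c : ℝ}

lemma eventually_one_sub_pow_floor_le (hp : ∀ᶠ n in atTop, p n ∈ Set.Icc 0 1)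
    (hplog : Tendsto (fun n : ℕ => p n / (Real.log n / n)) atTop atTop) (hc : 0 < c) {η : ℝ}
    (hη : 0 < η) : ∀ᶠ n : ℕ in atTop, (1 - p n) ^ ⌊c * n⌋₊ ≤ η := by
  filter_upwards [hp, eventually_mul_natCast_le_exp hplog hc (Real.exp 1 / η),
    eventually_ge_atTop 1] with n hpn hexp hn
  calc (1 - p n) ^ ⌊c * n⌋₊ ≤ Real.exp 1 * Real.exp (-(c * n * p n)) :=
        one_sub_pow_floor_le hpn.1 hpn.2 _
    _ = Real.exp 1 / Real.exp (c * (n * p n)) := by rw [Real.exp_neg, mul_assoc c, div_eq_mul_inv]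
    _ ≤ η := by
        rw [div_le_comm₀ (Real.exp_pos _) hη]
        exact (le_mul_of_one_le_right (by positivity) (mod_cast hn)).trans hexp

lemma eventually_failure_bound_le (hp : ∀ᶠ n in atTop, p n ∈ Set.Icc 0 1)
    (hplog : Tendsto (fun n : ℕ => p n / (Real.log n / n)) atTop atTop) (hc : 0 < c) {δ : ℝ}
    (hδ : 0 < δ) {rate : ℕ → ℝ} (hrate : Tendsto rate atTop (nhds c)) :
    ∀ᶠ n : ℕ in atTop,
      ⌊c * n⌋₊ * (2 * Real.exp (-rate n * (n * p n))) + n * (1 - p n) ^ ⌊c * n⌋₊ ≤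
        Real.exp (-c * n * p n * (1 - δ)) := by
  have hslack : c * (1 - δ / 2) < c := by nlinarith
  filter_upwards [hp, hrate.eventually_const_lt hslack,
    eventually_mul_natCast_le_exp hplog (by positivity : 0 < c * (δ / 2)) (2 * c + Real.exp 1)]
    with n hpn hraten hexp
  have hnp : 0 ≤ n * p n := mul_nonneg n.cast_nonneg hpn.1
  have hdecay {r : ℝ} (hr : c * (1 - δ / 2) ≤ r) :
      Real.exp (-r * (n * p n)) ≤ Real.exp (-(c * (1 - δ / 2)) * (n * p n)) := by gcongr
  set E := Real.exp (-(c * (1 - δ / 2)) * (n * p n))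
  have hpiles : Real.exp (-rate n * (n * p n)) ≤ E := hdecay hraten.le
  have hunpicked : (1 - p n) ^ ⌊c * n⌋₊ ≤ Real.exp 1 * E :=
    calc (1 - p n) ^ ⌊c * n⌋₊ ≤ Real.exp 1 * Real.exp (-(c * n * p n)) :=
          one_sub_pow_floor_le hpn.1 hpn.2 _
      _ = Real.exp 1 * Real.exp (-c * (n * p n)) := by ring_nf
      _ ≤ Real.exp 1 * E := by
        grw [hdecay hslack.le]
  calc ⌊c * n⌋₊ * (2 * Real.exp (-rate n * (n * p n))) + n * (1 - p n) ^ ⌊c * n⌋₊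
      ≤ c * n * (2 * E) + n * (Real.exp 1 * E) := by
        gcongr
        exact Nat.floor_le (by positivity)
    _ = (2 * c + Real.exp 1) * n * E := by ring
    _ ≤ Real.exp (c * (δ / 2) * (n * p n)) * E := by gcongr
    _ = Real.exp (-c * n * p n * (1 - δ)) := by
        rw [← Real.exp_add]
        ring_nf

lemma tendsto_sq_div_two_add {α : Type*} {l : Filter α} {f : α → ℝ} {e : ℝ}
    (hf : Tendsto f l (nhds e)) (he : 2 + e ≠ 0) :
    Tendsto (fun a => f a ^ 2 / (2 + f a)) l (nhds (e ^ 2 / (2 + e))) :=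
  (hf.pow 2).div (hf.const_add 2) he

end Asymptotics

/-- The limit shape theorem for the card-based stochastic Bulgarian solitaire.
For each `n`, play `m n` rounds with pick-probability `p n`, where `p n → 0`,
`p n / (log n / n) → ∞` and `m n > (ε²/(2+ε))·n`.  The rounds are 0-indexed by
`Fin (m n)`; `X (i, t) ω = 1` means card `i` is picked in round `t+1`, and
`c i` is the (0-indexed) initial pile of card `i`.  After `m n` rounds, the pile
composition `α` is (0-indexed; part `j` corresponds to the pile `k = j+1`):
for `j < m n`, the number of cards picked in round `m n - j` (0-indexed round
`m n - 1 - j`) and never picked afterwards; for `j ≥ m n`, the number of cards of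
initial pile `j - m n` never picked at all.  Then, for all large `n`, the sorted
configuration `λ⁽ᵐ⁾ = ord α` satisfies
`P(‖∂^{1/p} λ⁽ᵐ⁾ - e^{-x}‖_∞ ≤ ε) ≥ 1 - exp(-(ε²/(2+ε))·n·p·(1-δ))`. -/
theorem limit_shape_of_stochastic_bulgarian_solitaire
    (p : ℕ → ℝ) (hp : ∀ n, 0 < p n ∧ p n < 1)
    (hp0 : Tendsto p atTop (nhds 0))
    (hplog : Tendsto (fun n => p n / (Real.log n / n)) atTop atTop)
    (ε δ : ℝ) (hε : 0 < ε) (hδ0 : 0 < δ) (hδ1 : δ < 1)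
    (m : ℕ → ℕ) (hm : ∀ n, 0 < m n ∧ (ε ^ 2 / (2 + ε)) * n < m n) :
    ∃ N : ℕ, ∀ n, N ≤ n →
      ∀ (Ω : Type) (_ : MeasurableSpace Ω) (P : Measure Ω),
        IsProbabilityMeasure P →
        ∀ X : Fin n × Fin (m n) → Ω → ℕ,
          (∀ idx, Measurable (X idx)) →
          (∀ idx ω, X idx ω = 0 ∨ X idx ω = 1) →
          (∀ idx, P {ω | X idx ω = 1} = ENNReal.ofReal (p n)) →
          iIndepFun X P →
          ∀ c : Fin n → ℕ,
            ENNReal.ofReal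
                (1 - Real.exp (-(ε ^ 2 / (2 + ε)) * n * p n * (1 - δ))) ≤
              P {ω | ⨆ x : NNReal,
                  |rescaledBoundary n (1 / p n)
                      (ordC (fun j =>
                        if hj : j < m n then
                          Set.ncard {i : Fin n |
                            X (i, ⟨m n - 1 - j, by have := (hm n).1; omega⟩) ω = 1 ∧
                            ∀ s : Fin (m n), m n - 1 - j < (s : ℕ) → X (i, s) ω = 0}
                        else
                          Set.ncard {i : Fin n | c i = j - m n ∧
                            ∀ s : Fin (m n), X (i, s) ω = 0})) x -
                    Real.exp (-(x : ℝ))| ≤ ε} := by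
  have hc : 0 < ε ^ 2 / (2 + ε) := by positivity
  have hlim : Tendsto (fun n => ε - 3 * p n) atTop (nhds ε) := by
    simpa using (hp0.const_mul 3).const_sub ε
  have hpIcc : ∀ᶠ n in atTop, p n ∈ Set.Icc 0 1 :=
    .of_forall fun n => ⟨(hp n).1.le, (hp n).2.le⟩
  refine eventually_atTop.1 ?_
  filter_upwards [hp0.eventually_le_const (by positivity : 0 < min (1 / 2) (ε / 6)),
    eventually_one_sub_pow_floor_le hpIcc hplog hc (half_pos hε),
    eventually_failure_bound_le hpIcc hplog hc hδ0
      (tendsto_sq_div_two_add hlim (by positivity)), eventually_gt_atTop 0]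
    with n hpn hpow hfail hn Ω _ P _ X hX hX01 hX1 hindep c
  obtain ⟨hpn₁, hpn₂⟩ := le_min_iff.1 hpn
  have : NeZero n := ⟨hn.ne'⟩
  have hiid : IsIIDBernoulli X (p n) P :=
    ⟨hX, hX01, fun a => by rw [measureReal_def, hX1, ENNReal.toReal_ofReal (hp n).1.le], hindep⟩
  have hJ : ⌊ε ^ 2 / (2 + ε) * n⌋₊ ≤ m n := Nat.floor_le_of_le (hm n).2.le
  have hshape := hiid.one_sub_le_measureReal_abs_rescaledBoundary_sub_exp_neg_le c (hp n).1
    hpn₁ hJ (hpow.trans (by linarith : ε / 2 ≤ ε - 3 * p n))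
  rw [Fintype.card_fin, sub_add_cancel] at hshape
  refine ENNReal.ofReal_le_of_le_toReal ?_
  refine ((sub_le_sub_left hfail 1).trans hshape).trans (measureReal_mono fun ω hω => ?_)
  exact ciSup_le fun x : NNReal => hω x x.coe_nonneg
end

section
/- For each positive integer n let p = p(n) ∈ (0,1) satisfy p → 0 and p/((log n)/n) → ∞ as n → ∞. Let K_n be the Markov transition kernel on the set P(n) of integer partitions of n defined by one round of the card-based stochastic Bulgarian solitaire with probability p: given λ = (λ_1, …, λ_ℓ) ∈ P(n), draw independent random variables B_j ~ Bin(λ_j, p) for j = 1, …, ℓ, and move to the partition obtained by sorting the sequence (Σ_{j=1}^ℓ B_j, λ_1 − B_1, …, λ_ℓ − B_ℓ) in weakly decreasing order and discarding zero parts. Let π_{p,n} be a probability distribution on P(n) that is invariant under K_n (i.e., the pushforward of π_{p,n} under one step of K_n equals π_{p,n}). Then for every ε > 0 and every δ ∈ (0,1) there exists N such that for all n ≥ N, π_{p,n}({λ ∈ P(n) : sup_{x≥0} |∂^{1/p} λ(x) − e^{−x}| ≤ ε}) ≥ 1 − exp(−(ε²/(2+ε))·n·p·(1−δ)). -/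
open Filter

/-- `l : ℕ → ℕ` is a weak composition of `n`: finitely many nonzero parts, summing to `n`. -/
def IsWeakCompOf (n : ℕ) (l : ℕ → ℕ) : Prop :=
  (Function.support l).Finite ∧ ∑ᶠ i, l i = n

/-- `l : ℕ → ℕ` is an integer partition of `n` (weakly decreasing parts `l 0 ≥ l 1 ≥ …`,
with `l j = 0` for `j` beyond the number of parts). -/
def IsPartitionOf (n : ℕ) (l : ℕ → ℕ) : Prop :=
  IsWeakCompOf n l ∧ Antitone l

/-- Transition probability of one round of the card-based stochastic Bulgarian solitaire
with pick-probability `p`, from the partition `l` to the partition `l'`: draw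
independent `b j ~ Bin(l j, p)` from each pile `l j`, form the configuration
`(Σⱼ b j, l 0 - b 0, l 1 - b 1, …)` and sort it in weakly decreasing order.
(For `j` with `l j = 0` necessarily `b j = 0` and the corresponding factor is `1`.) -/
noncomputable def stepProb (p : ℝ) (l l' : ℕ → ℕ) : ℝ :=
  ∑ᶠ b ∈ {b : ℕ → ℕ | (∀ j, b j ≤ l j) ∧
      ordC (fun j => if j = 0 then ∑ᶠ i, b i else l (j - 1) - b (j - 1)) = l'},
    ∏ᶠ j, ((l j).choose (b j) : ℝ) * p ^ (b j) * (1 - p) ^ (l j - b j)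

/-! Keep the piles unsorted: the drawn cards form pile `0` and the rest of pile `j` becomes pile
`j + 1`. Symmetric functions do not see the sorting, so on them this chain and the chain on
partitions have the same transition operator. In the unsorted chain every card moves
independently, to pile `0` with probability `p` and to the next pile otherwise; dually, the
transition operator sends the monomial `∏ j, z j ^ c j` to a monomial of the same kind. After
`m > i` rounds from any start, pile `i` is therefore `Bin(n, p (1 - p) ^ i)`, and a pile `j ≥ m` is
occupied with probability at most `n (1 - p) ^ m`.

Chernoff bounds for the piles `i < m`, a union bound, and the fact that sorting does not increase
the distance to the decreasing profile `n p (1 - p) ^ i` control the sorted configuration after `m`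
rounds, uniformly in the start; stationarity transfers the bound to `π`. Finally
`(1 - p) ^ ⌊x / p⌋ → exp (-x)` uniformly in `x`, and as `n p ≫ log n`, replacing `ε` by
`ε (1 - δ / 2)` gains enough in the exponent to absorb the factor `O(n)` of the union bound.
-/

namespace BulgarianSolitaire

section Sorting

variable {c : ℕ → ℕ}

lemma exists_mem_le_of_card_eq_succ {s : Finset ℕ} {k : ℕ} (hs : s.card = k + 1) :
    ∃ i ∈ s, k ≤ i := by
  by_contra! h
  have hle := Finset.card_le_card fun i hi => Finset.mem_range.2 (h i hi)
  rw [hs, Finset.card_range] at hle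
  omega

lemma isGreatest_ordC (hc : BddAbove (Set.range c)) (k : ℕ) :
    IsGreatest {m | ∃ s : Finset ℕ, s.card = k + 1 ∧ ∀ i ∈ s, m ≤ c i} (ordC c k) := by
  have hbdd : BddAbove {m | ∃ s : Finset ℕ, s.card = k + 1 ∧ ∀ i ∈ s, m ≤ c i} := by
    obtain ⟨M, hM⟩ := hc
    refine ⟨M, ?_⟩
    rintro m ⟨s, hs, hm⟩
    obtain ⟨i, hi, -⟩ := exists_mem_le_of_card_eq_succ hs
    exact (hm i hi).trans (hM ⟨i, rfl⟩)
  refine ⟨Nat.sSup_mem ⟨0, Finset.range (k + 1), Finset.card_range _, fun i _ => zero_le⟩ hbdd, ?_⟩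
  exact fun m hm => le_csSup hbdd hm

/-- Sorting is non-expansive around a decreasing profile: the `k + 1` parts `c 0, …, c k` exceed
`d k - t`, and among any `k + 1` parts some `c i` with `k ≤ i` is at most `d k + t`. -/
lemma abs_ordC_sub_le (hc : BddAbove (Set.range c)) {d : ℕ → ℝ} (hd : Antitone d) {t : ℝ}
    (h : ∀ i, |(c i : ℝ) - d i| ≤ t) (k : ℕ) : |(ordC c k : ℝ) - d k| ≤ t := by
  obtain ⟨⟨s, hs, hle⟩, hge⟩ := isGreatest_ordC hc k
  rw [abs_sub_le_iff]
  constructor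
  · obtain ⟨i, hi, hki⟩ := exists_mem_le_of_card_eq_succ hs
    have hci : (ordC c k : ℝ) ≤ c i := Nat.cast_le.2 (hle i hi)
    linarith [hd hki, (abs_sub_le_iff.1 (h i)).1]
  · have hceil : ⌈d k - t⌉₊ ≤ ordC c k := by
      refine hge ⟨Finset.range (k + 1), Finset.card_range _, fun i hi => Nat.ceil_le.2 ?_⟩
      linarith [hd (Finset.mem_range_succ_iff.1 hi), (abs_sub_le_iff.1 (h i)).2]
    linarith [Nat.ceil_le.1 hceil]

lemma ordC_of_antitone (hc : Antitone c) : ordC c = c := by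
  have hbdd : BddAbove (Set.range c) := ⟨c 0, by rintro _ ⟨i, rfl⟩; exact hc i.zero_le⟩
  funext k
  have h := abs_ordC_sub_le hbdd (d := fun i => (c i : ℝ)) (fun i j hij => Nat.cast_le.2 (hc hij))
    (t := 0) (fun i => by rw [sub_self, abs_zero]) k
  exact_mod_cast sub_eq_zero.1 (abs_nonpos_iff.1 h)

lemma ordC_comp_perm (c : ℕ → ℕ) (σ : Equiv.Perm ℕ) : ordC (c ∘ σ) = ordC c := by
  funext k
  unfold ordC
  congr 1
  ext m
  refine σ.finsetCongr.exists_congr fun s => ?_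
  rw [Equiv.finsetCongr_apply, Finset.card_map, Finset.forall_mem_map]
  rfl

end Sorting

section Configurations

lemma exists_perm_antitone_comp (c : ℕ →₀ ℕ) : ∃ σ : Equiv.Perm ℕ, Antitone (c ∘ σ) := by
  obtain ⟨M, hM⟩ := c.support.exists_nat_subset_range
  let g : Fin M → ℕᵒᵈ := fun i => OrderDual.toDual (c i)
  let σ : Equiv.Perm ℕ := (Tuple.sort g).viaEmbedding Fin.valEmbedding
  have hlt (i : Fin M) : σ i = Tuple.sort g i :=
    Equiv.Perm.viaEmbedding_apply _ Fin.valEmbedding i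
  have hge {j : ℕ} (hj : M ≤ j) : σ j = j :=
    Equiv.Perm.viaEmbedding_apply_of_notMem _ _ _ (by simpa using hj)
  refine ⟨σ, fun i j hij => ?_⟩
  rcases lt_or_ge j M with hj | hj
  · simp only [Function.comp_apply]
    rw [hlt ⟨i, hij.trans_lt hj⟩, hlt ⟨j, hj⟩]
    exact Tuple.monotone_sort g (Fin.mk_le_mk.2 hij)
  · have hcj : c j = 0 := Finsupp.notMem_support_iff.1 fun hmem =>
      (Finset.mem_range.1 (hM hmem)).not_ge hj
    simp only [Function.comp_apply, hge hj, hcj, zero_le]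

lemma exists_coe_equivMapDomain_eq_ordC (c : ℕ →₀ ℕ) :
    ∃ σ : Equiv.Perm ℕ, ⇑(c.equivMapDomain σ) = ordC c ∧ Antitone (ordC c) := by
  obtain ⟨σ, hσ⟩ := exists_perm_antitone_comp c
  have hsort : ordC c = c ∘ σ := by rw [← ordC_comp_perm c σ, ordC_of_antitone hσ]
  exact ⟨σ.symm, by rw [hsort]; rfl, by rwa [hsort]⟩

lemma ordC_equivMapDomain (c : ℕ →₀ ℕ) (σ : Equiv.Perm ℕ) :
    ordC (c.equivMapDomain σ) = ordC c :=
  ordC_comp_perm c σ.symm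

lemma degree_equivMapDomain {ι : Type*} (c : ι →₀ ℕ) (σ : Equiv.Perm ι) :
    (c.equivMapDomain σ).degree = c.degree := by
  rw [Finsupp.equivMapDomain_eq_mapDomain, Finsupp.degree_mapDomain]

lemma finsum_coe_eq_degree {ι : Type*} (c : ι →₀ ℕ) : ∑ᶠ i, c i = c.degree :=
  finsum_eq_sum_of_support_subset _ c.fun_support_eq.subset

end Configurations

section Binomial

variable {ι R : Type*} [CommSemiring R]

lemma sum_finsupp_prod {α : Type*} [Zero α] (s : Finset ι) (t : ι → Finset α) (F : ι → α → R) :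
    ∑ f ∈ s.finsupp t, ∏ i ∈ s, F i (f i) = ∏ i ∈ s, ∑ a ∈ t i, F i a := by
  classical
  rw [Finset.finsupp, Finset.sum_map, Finset.prod_sum]
  refine Finset.sum_congr rfl fun g _ => ?_
  rw [← Finset.prod_attach]
  refine Finset.prod_congr rfl fun i _ => ?_
  rw [Function.Embedding.coeFn_mk, Finsupp.indicator_of_mem i.2]

lemma Iic_eq_finsupp [DecidableEq ι] (c : ι →₀ ℕ) :
    Finset.Iic c = c.support.finsupp fun j => Finset.Iic (c j) := by
  ext b
  rw [Finset.mem_Iic, Finset.mem_finsupp_iff]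
  simp only [Finset.mem_Iic]
  refine ⟨fun h => ⟨Finsupp.support_mono h, fun j _ => h j⟩, fun h => ?_⟩
  exact (Finsupp.le_iff' _ _ h.1).2 h.2

lemma sum_Iic_prod_choose (u v : ι → R) (c : ι →₀ ℕ) [DecidableEq ι] :
    ∑ b ∈ Finset.Iic c, c.prod (fun j k => (u j ^ b j * v j ^ (k - b j)) * k.choose (b j)) =
      c.prod fun j k => (u j + v j) ^ k := by
  simp only [Finsupp.prod, Iic_eq_finsupp]
  rw [sum_finsupp_prod c.support _ fun j a => (u j ^ a * v j ^ (c j - a)) * (c j).choose a]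
  refine Finset.prod_congr rfl fun j _ => ?_
  rw [add_pow, Nat.range_succ_eq_Iic]

end Binomial

section Dynamics

variable {p : ℝ} {c b : ℕ →₀ ℕ}

/-- The unsorted configuration after one round: the cards `b` drawn from the piles of `c` form the
new pile `0`, and what remains of pile `j` becomes pile `j + 1`. -/
noncomputable def nextConfig (c b : ℕ →₀ ℕ) : ℕ →₀ ℕ :=
  Finsupp.single 0 b.degree + (c - b).mapDomain Nat.succ

@[simp]
lemma nextConfig_zero (c b : ℕ →₀ ℕ) : nextConfig c b 0 = b.degree := by
  simp [nextConfig, Finsupp.mapDomain_of_notMem_range]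

@[simp]
lemma nextConfig_succ (c b : ℕ →₀ ℕ) (j : ℕ) : nextConfig c b (j + 1) = c j - b j := by
  rw [nextConfig, Finsupp.add_apply, Finsupp.single_eq_of_ne j.succ_ne_zero, zero_add,
    Finsupp.mapDomain_apply Nat.succ_injective, Finsupp.tsub_apply]

lemma degree_nextConfig (hb : b ≤ c) : (nextConfig c b).degree = c.degree := by
  rw [nextConfig, map_add, Finsupp.degree_single, Finsupp.degree_mapDomain, ← map_add,
    add_tsub_cancel_of_le hb]

lemma nextConfig_equivMapDomain (c b : ℕ →₀ ℕ) (σ : Equiv.Perm ℕ) :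
    nextConfig (c.equivMapDomain σ) (b.equivMapDomain σ) =
      (nextConfig c b).equivMapDomain (σ.viaEmbedding ⟨Nat.succ, Nat.succ_injective⟩) := by
  set τ := σ.viaEmbedding ⟨Nat.succ, Nat.succ_injective⟩
  have hzero : τ 0 = 0 := Equiv.Perm.viaEmbedding_apply_of_notMem _ _ _ (by simp)
  have hsucc (j : ℕ) : τ (j + 1) = σ j + 1 :=
    Equiv.Perm.viaEmbedding_apply σ ⟨Nat.succ, Nat.succ_injective⟩ j
  ext i
  obtain ⟨j, rfl⟩ := τ.surjective i
  rw [Finsupp.equivMapDomain_apply, Equiv.symm_apply_apply]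
  cases j with
  | zero => rw [hzero, nextConfig_zero, nextConfig_zero, degree_equivMapDomain]
  | succ j =>
    simp only [hsucc, nextConfig_succ, Finsupp.equivMapDomain_apply, Equiv.symm_apply_apply]

/-- The probability that independent draws `Bin(c j, p)` from the piles of `c` yield `b`. -/
noncomputable def drawProb (p : ℝ) (c b : ℕ →₀ ℕ) : ℝ :=
  c.prod fun j k => (p ^ b j * (1 - p) ^ (k - b j)) * k.choose (b j)

lemma drawProb_nonneg (hp0 : 0 ≤ p) (hp1 : p ≤ 1) (c b : ℕ →₀ ℕ) : 0 ≤ drawProb p c b :=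
  Finset.prod_nonneg fun _ _ => mul_nonneg
    (mul_nonneg (pow_nonneg hp0 _) (pow_nonneg (sub_nonneg.2 hp1) _)) (Nat.cast_nonneg _)

lemma drawProb_equivMapDomain (p : ℝ) (c b : ℕ →₀ ℕ) (σ : Equiv.Perm ℕ) :
    drawProb p (c.equivMapDomain σ) (b.equivMapDomain σ) = drawProb p c b := by
  simp only [drawProb, Finsupp.prod_equivMapDomain, Finsupp.equivMapDomain_apply,
    Equiv.symm_apply_apply]

/-- The transition operator of the unsorted chain: `transition p f c` is the expectation of `f`
after one round started from `c`. -/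
noncomputable def transition (p : ℝ) : Module.End ℝ ((ℕ →₀ ℕ) → ℝ) where
  toFun f c := ∑ b ∈ Finset.Iic c, drawProb p c b * f (nextConfig c b)
  map_add' f g := by
    funext c
    simp only [Pi.add_apply, mul_add, Finset.sum_add_distrib]
  map_smul' a f := by
    funext c
    simp only [Pi.smul_apply, smul_eq_mul, RingHom.id_apply, Finset.mul_sum, mul_left_comm]

lemma transition_apply (p : ℝ) (f : (ℕ →₀ ℕ) → ℝ) (c : ℕ →₀ ℕ) :
    transition p f c = ∑ b ∈ Finset.Iic c, drawProb p c b * f (nextConfig c b) := rfl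

lemma monotone_transition (hp0 : 0 ≤ p) (hp1 : p ≤ 1) : Monotone (transition p) :=
  fun _ _ h c => Finset.sum_le_sum fun b _ =>
    mul_le_mul_of_nonneg_left (h _) (drawProb_nonneg hp0 hp1 c b)

lemma monotone_transition_pow (hp0 : 0 ≤ p) (hp1 : p ≤ 1) (m : ℕ) :
    Monotone (transition p ^ m) := by
  rw [Module.End.coe_pow]
  exact (monotone_transition hp0 hp1).iterate m

/-- A function of configurations that ignores the order of the piles. -/
def IsSymmetric (f : (ℕ →₀ ℕ) → ℝ) : Prop :=
  ∀ (σ : Equiv.Perm ℕ) (c : ℕ →₀ ℕ), f (c.equivMapDomain σ) = f c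

lemma IsSymmetric.transition {f : (ℕ →₀ ℕ) → ℝ} (hf : IsSymmetric f) (p : ℝ) :
    IsSymmetric (transition p f) := by
  intro σ c
  symm
  refine Finset.sum_bij' (fun b _ => b.equivMapDomain σ) (fun b _ => b.equivMapDomain σ.symm)
    (fun b hb => Finset.mem_Iic.2 fun j => Finset.mem_Iic.1 hb (σ.symm j))
    (fun b hb => Finset.mem_Iic.2 fun j => ?_) (fun b _ => ?_) (fun b _ => ?_) (fun b _ => ?_)
  · simpa using Finset.mem_Iic.1 hb (σ j)
  · rw [← Finsupp.equivMapDomain_trans, Equiv.self_trans_symm, Finsupp.equivMapDomain_refl]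
  · rw [← Finsupp.equivMapDomain_trans, Equiv.symm_trans_self, Finsupp.equivMapDomain_refl]
  · rw [drawProb_equivMapDomain, nextConfig_equivMapDomain, hf]

lemma IsSymmetric.transition_pow {f : (ℕ →₀ ℕ) → ℝ} (hf : IsSymmetric f) (p : ℝ) (m : ℕ) :
    IsSymmetric ((BulgarianSolitaire.transition p ^ m) f) := by
  induction m with
  | zero => rwa [pow_zero]
  | succ m ih =>
    rw [pow_succ']
    exact ih.transition p

end Dynamics

section Duality

/-- The configuration monomial `c ↦ ∏ j, z j ^ c j`, whose expectation is the generating function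
of the pile sizes. -/
noncomputable def pileMonomial (z : ℕ → ℝ) (c : ℕ →₀ ℕ) : ℝ :=
  c.prod fun j k => z j ^ k

lemma pileMonomial_const (s : ℝ) (c : ℕ →₀ ℕ) : pileMonomial (fun _ => s) c = s ^ c.degree :=
  Finset.prod_pow_eq_pow_sum c.support c s

lemma pileMonomial_update_one (i : ℕ) (x : ℝ) (c : ℕ →₀ ℕ) :
    pileMonomial (Function.update 1 i x) c = x ^ c i := by
  have hone (j : ℕ) (hj : j ≠ i) : (Function.update 1 i x : ℕ → ℝ) j ^ c j = 1 := by
    rw [Function.update_of_ne hj, Pi.one_apply, one_pow]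
  calc c.prod (fun j k => (Function.update 1 i x : ℕ → ℝ) j ^ k)
    _ = (Function.update 1 i x : ℕ → ℝ) i ^ c i :=
        Finsupp.prod_eq_single i (fun j _ => hone j) fun _ => pow_zero _
    _ = x ^ c i := by rw [Function.update_self]

lemma pileMonomial_add (z : ℕ → ℝ) (c d : ℕ →₀ ℕ) :
    pileMonomial z (c + d) = pileMonomial z c * pileMonomial z d :=
  Finsupp.prod_add_index' (fun _ => pow_zero _) fun _ => pow_add _

lemma pileMonomial_single (z : ℕ → ℝ) (j k : ℕ) : pileMonomial z (Finsupp.single j k) = z j ^ k :=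
  Finsupp.prod_single_index (pow_zero _)

lemma pileMonomial_mapDomain_succ (z : ℕ → ℝ) (c : ℕ →₀ ℕ) :
    pileMonomial z (c.mapDomain Nat.succ) = pileMonomial (z ∘ Nat.succ) c :=
  Finsupp.prod_mapDomain_index_inj Nat.succ_injective

lemma pileMonomial_nextConfig (z : ℕ → ℝ) {c b : ℕ →₀ ℕ} (hb : b ≤ c) :
    pileMonomial z (nextConfig c b) =
      c.prod fun j k => z 0 ^ b j * z (j + 1) ^ (k - b j) := by
  calc pileMonomial z (nextConfig c b)
    _ = z 0 ^ b.degree * (c - b).prod fun j k => z (j + 1) ^ k := by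
        rw [nextConfig, pileMonomial_add, pileMonomial_single, pileMonomial_mapDomain_succ]
        rfl
    _ = (c.prod fun j _ => z 0 ^ b j) * c.prod fun j k => z (j + 1) ^ (k - b j) := by
        congr 1
        · rw [← pileMonomial_const]
          exact Finsupp.prod_of_support_subset b (Finsupp.support_mono hb) _ fun _ _ => pow_zero _
        · exact Finsupp.prod_of_support_subset (c - b) (Finsupp.support_mono tsub_le_self) _
            fun _ _ => pow_zero _
    _ = c.prod fun j k => z 0 ^ b j * z (j + 1) ^ (k - b j) := Finsupp.prod_mul.symm

/-- The transition operator of a single card, which is drawn to pile `0` with probability `p` and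
otherwise moves from pile `j` to pile `j + 1`. -/
def cardTransition (p : ℝ) (z : ℕ → ℝ) : ℕ → ℝ :=
  fun j => p * z 0 + (1 - p) * z (j + 1)

/-- The cards move independently. -/
lemma transition_pileMonomial (p : ℝ) (z : ℕ → ℝ) :
    transition p (pileMonomial z) = pileMonomial (cardTransition p z) := by
  funext c
  calc transition p (pileMonomial z) c
    _ = ∑ b ∈ Finset.Iic c, c.prod fun j k =>
          ((p * z 0) ^ b j * ((1 - p) * z (j + 1)) ^ (k - b j)) * k.choose (b j) := by
        rw [transition_apply]
        refine Finset.sum_congr rfl fun b hb => ?_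
        rw [pileMonomial_nextConfig z (Finset.mem_Iic.1 hb), drawProb, ← Finsupp.prod_mul]
        refine Finset.prod_congr rfl fun j _ => ?_
        beta_reduce
        rw [mul_right_comm, mul_mul_mul_comm, ← mul_pow, ← mul_pow]
    _ = pileMonomial (cardTransition p z) c :=
        sum_Iic_prod_choose (fun _ => p * z 0) (fun j => (1 - p) * z (j + 1)) c

lemma transition_pow_pileMonomial (p : ℝ) (z : ℕ → ℝ) (m : ℕ) :
    (transition p ^ m) (pileMonomial z) = pileMonomial ((cardTransition p)^[m] z) := by
  induction m with
  | zero => rfl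
  | succ m ih =>
    rw [pow_succ', Module.End.mul_apply, ih, transition_pileMonomial, Function.iterate_succ_apply']

lemma iterate_cardTransition (p : ℝ) (z : ℕ → ℝ) (m j : ℕ) :
    (cardTransition p)^[m] z j =
      ∑ i ∈ Finset.range m, p * (1 - p) ^ i * z i + (1 - p) ^ m * z (j + m) := by
  induction m generalizing j with
  | zero => simp
  | succ m ih =>
    calc (cardTransition p)^[m + 1] z j
      _ = p * (cardTransition p)^[m] z 0 + (1 - p) * (cardTransition p)^[m] z (j + 1) := by
          rw [Function.iterate_succ_apply', cardTransition]
      _ = _ := by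
          rw [ih, ih, Finset.sum_range_succ, zero_add, add_right_comm j 1 m, ← add_assoc j m 1]
          ring

lemma sum_range_geometric_add (p : ℝ) (m : ℕ) :
    ∑ i ∈ Finset.range m, p * (1 - p) ^ i + (1 - p) ^ m = 1 := by
  rw [← Finset.mul_sum]
  linarith [mul_neg_geom_sum (1 - p) m]

lemma iterate_cardTransition_update_one (p x : ℝ) {i m : ℕ} (hi : i < m) :
    (cardTransition p)^[m] (Function.update 1 i x) = fun _ => 1 + p * (1 - p) ^ i * (x - 1) := by
  have hsplit : (Function.update 1 i x : ℕ → ℝ) = 1 + Pi.single i (x - 1) := by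
    ext k
    rcases eq_or_ne k i with rfl | hk <;> simp [*]
  funext j
  rw [iterate_cardTransition, hsplit]
  simp only [Pi.add_apply, Pi.one_apply, mul_add, mul_one, Finset.sum_add_distrib,
    Pi.single_apply, mul_ite, mul_zero, Finset.sum_ite_eq', Finset.mem_range, hi, if_true]
  rw [if_neg (by omega)]
  linarith [sum_range_geometric_add p m]

/-- After `m > i` rounds pile `i` has the distribution `Bin(n, p (1 - p) ^ i)`, where `n` is the
number of cards. -/
lemma transition_pow_pow_apply (p x : ℝ) {i m : ℕ} (hi : i < m) (c : ℕ →₀ ℕ) :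
    (transition p ^ m) (fun d => x ^ d i) c =
      (1 + p * (1 - p) ^ i * (x - 1)) ^ c.degree := by
  have hmonomial : (fun d : ℕ →₀ ℕ => x ^ d i) = pileMonomial (Function.update 1 i x) :=
    funext fun d => (pileMonomial_update_one i x d).symm
  rw [hmonomial, transition_pow_pileMonomial, iterate_cardTransition_update_one p x hi,
    pileMonomial_const]

lemma indicator_exists_ge_eq_sub (m : ℕ) :
    {d : ℕ →₀ ℕ | ∃ j ≥ m, d j ≠ 0}.indicator (1 : (ℕ →₀ ℕ) → ℝ) =
      pileMonomial (fun _ => 1) - pileMonomial ((Set.Iio m).indicator 1) := by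
  funext d
  rw [Pi.sub_apply, pileMonomial_const, one_pow]
  by_cases hd : ∃ j ≥ m, d j ≠ 0
  · obtain ⟨j, hj, hdj⟩ := hd
    have hzero : pileMonomial ((Set.Iio m).indicator 1) d = 0 := by
      refine Finset.prod_eq_zero (Finsupp.mem_support_iff.2 hdj) ?_
      beta_reduce
      rw [Set.indicator_of_notMem (Set.notMem_Iio.2 hj), zero_pow hdj]
    rw [Set.indicator_of_mem (Set.mem_ofPred.2 ⟨j, hj, hdj⟩), hzero, sub_zero, Pi.one_apply]
  · have hone : pileMonomial ((Set.Iio m).indicator 1) d = 1 := by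
      refine Finset.prod_eq_one fun j hj => ?_
      have hjm : j < m := by
        by_contra! hge
        exact hd ⟨j, hge, Finsupp.mem_support_iff.1 hj⟩
      beta_reduce
      rw [Set.indicator_of_mem (Set.mem_Iio.2 hjm), Pi.one_apply, one_pow]
    rw [Set.indicator_of_notMem (s := {d : ℕ →₀ ℕ | ∃ j ≥ m, d j ≠ 0}) hd, hone, sub_self]

lemma iterate_cardTransition_indicator_Iio (p : ℝ) (m : ℕ) :
    (cardTransition p)^[m] ((Set.Iio m).indicator 1) = fun _ => 1 - (1 - p) ^ m := by
  funext j
  have hlt : ∀ i ∈ Finset.range m,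
      p * (1 - p) ^ i * (Set.Iio m).indicator 1 i = p * (1 - p) ^ i := fun i hi => by
    rw [Set.indicator_of_mem (Set.mem_Iio.2 (Finset.mem_range.1 hi)), Pi.one_apply, mul_one]
  have hge : j + m ∉ Set.Iio m := by simp
  rw [iterate_cardTransition, Finset.sum_congr rfl hlt, Set.indicator_of_notMem hge, mul_zero,
    add_zero]
  exact eq_sub_of_add_eq (sum_range_geometric_add p m)

/-- A pile `j ≥ m` is nonempty only if some card has escaped being drawn for `m` rounds. -/
lemma transition_pow_indicator_exists_ge (p : ℝ) (m : ℕ) (c : ℕ →₀ ℕ) :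
    (transition p ^ m) ({d | ∃ j ≥ m, d j ≠ 0}.indicator 1) c =
      1 - (1 - (1 - p) ^ m) ^ c.degree := by
  have hone : (cardTransition p)^[m] (fun _ => 1) = fun _ => 1 := by
    refine Function.iterate_fixed (funext fun j => ?_) m
    change p * 1 + (1 - p) * 1 = 1
    ring
  rw [indicator_exists_ge_eq_sub, map_sub, transition_pow_pileMonomial,
    transition_pow_pileMonomial, iterate_cardTransition_indicator_Iio, hone, Pi.sub_apply,
    pileMonomial_const, pileMonomial_const, one_pow]

end Duality

section Deviation

/-- The exponential rate in the multiplicative Chernoff bound for a relative deviation `e`. -/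
noncomputable def chernoffRate (e : ℝ) : ℝ :=
  e ^ 2 / (2 + e)

lemma sub_mul_log_one_add_le {e : ℝ} (he : 0 ≤ e) :
    e - (1 + e) * Real.log (1 + e) ≤ -chernoffRate e := by
  have hlog := mul_le_mul_of_nonneg_left (Real.le_log_one_add_of_nonneg he)
    (by positivity : 0 ≤ 1 + e)
  have hrate : (1 + e) * (2 * e / (e + 2)) = e + chernoffRate e := by
    rw [chernoffRate]
    field_simp
    ring
  linarith

lemma log_one_add_le_self {e : ℝ} (he : 0 ≤ e) : Real.log (1 + e) ≤ e := by
  linarith [Real.log_le_sub_one_of_pos (by positivity : 0 < 1 + e)]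

/-- This is `θ ≤ sinh θ` for `θ = log (1 + e)`; it reduces the lower tail to the upper one. -/
lemma log_one_add_add_inv_sub_one_le {e : ℝ} (he : 0 ≤ e) :
    Real.log (1 + e) + ((1 + e)⁻¹ - 1) ≤ e - Real.log (1 + e) := by
  have hpos : 0 < 1 + e := by positivity
  have hsinh := Real.self_le_sinh_iff.2 (Real.log_nonneg (by linarith : 1 ≤ 1 + e))
  rw [Real.sinh_eq, Real.exp_neg, Real.exp_log hpos] at hsinh
  linarith

lemma chernoff_exponent_le {e μ M : ℝ} (he : 0 ≤ e) (hM : 0 ≤ M) (hμ : μ ≤ M) :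
    μ * (e - Real.log (1 + e)) - Real.log (1 + e) * (e * M) ≤ -(chernoffRate e * M) := by
  calc μ * (e - Real.log (1 + e)) - Real.log (1 + e) * (e * M)
    _ ≤ M * (e - Real.log (1 + e)) - Real.log (1 + e) * (e * M) :=
        sub_le_sub_right
          (mul_le_mul_of_nonneg_right hμ (sub_nonneg.2 (log_one_add_le_self he))) _
    _ = (e - (1 + e) * Real.log (1 + e)) * M := by ring
    _ ≤ -chernoffRate e * M := mul_le_mul_of_nonneg_right (sub_mul_log_one_add_le he) hM
    _ = -(chernoffRate e * M) := neg_mul _ _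

variable {p : ℝ}

lemma transition_pow_indicator_le_exp (hp0 : 0 ≤ p) (hp1 : p ≤ 1) {i m : ℕ} (hi : i < m)
    (c : ℕ →₀ ℕ) {s t : ℝ} {S : Set (ℕ →₀ ℕ)} (hS : ∀ d ∈ S, t ≤ s * d i) :
    (transition p ^ m) (S.indicator 1) c ≤
      Real.exp (c.degree * p * (1 - p) ^ i * (Real.exp s - 1) - t) := by
  have hq0 : 0 ≤ p * (1 - p) ^ i := mul_nonneg hp0 (pow_nonneg (sub_nonneg.2 hp1) i)
  have hq1 : p * (1 - p) ^ i ≤ 1 :=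
    mul_le_one₀ hp1 (pow_nonneg (sub_nonneg.2 hp1) i) (pow_le_one₀ (sub_nonneg.2 hp1) (by linarith))
  have hmarkov : S.indicator 1 ≤ Real.exp (-t) • fun d : ℕ →₀ ℕ => Real.exp s ^ d i := by
    refine Set.indicator_le' (fun d hd => ?_) fun d _ =>
      mul_nonneg (Real.exp_pos _).le (pow_nonneg (Real.exp_pos s).le _)
    rw [Pi.one_apply, Pi.smul_apply, smul_eq_mul, ← Real.exp_nat_mul, ← Real.exp_add]
    exact Real.one_le_exp (by linarith [hS d hd])
  calc (transition p ^ m) (S.indicator 1) c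
    _ ≤ (transition p ^ m) (Real.exp (-t) • fun d => Real.exp s ^ d i) c :=
        monotone_transition_pow hp0 hp1 m hmarkov c
    _ = Real.exp (-t) * (1 + p * (1 - p) ^ i * (Real.exp s - 1)) ^ c.degree := by
        rw [map_smul, Pi.smul_apply, transition_pow_pow_apply p _ hi, smul_eq_mul]
    _ ≤ Real.exp (-t) * Real.exp (p * (1 - p) ^ i * (Real.exp s - 1)) ^ c.degree := by
        gcongr
        · linarith [mul_nonneg hq0 (Real.exp_pos s).le]
        · linarith [Real.add_one_le_exp (p * (1 - p) ^ i * (Real.exp s - 1))]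
    _ = Real.exp (c.degree * p * (1 - p) ^ i * (Real.exp s - 1) - t) := by
        rw [← Real.exp_nat_mul, ← Real.exp_add]
        ring_nf

lemma degree_mul_mul_pow_le (hp0 : 0 ≤ p) (hp1 : p ≤ 1) (c : ℕ →₀ ℕ) (i : ℕ) :
    c.degree * p * (1 - p) ^ i ≤ c.degree * p :=
  mul_le_of_le_one_right (by positivity) (pow_le_one₀ (sub_nonneg.2 hp1) (by linarith))

lemma transition_pow_indicator_upper_tail_le (hp0 : 0 ≤ p) (hp1 : p ≤ 1) {i m : ℕ} (hi : i < m)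
    (c : ℕ →₀ ℕ) {e : ℝ} (he : 0 ≤ e) :
    (transition p ^ m)
        ({d | c.degree * p * (1 - p) ^ i + e * (c.degree * p) ≤ d i}.indicator 1) c ≤
      Real.exp (-(chernoffRate e * (c.degree * p))) := by
  refine (transition_pow_indicator_le_exp hp0 hp1 hi c (s := Real.log (1 + e)) fun d hd =>
    mul_le_mul_of_nonneg_left hd (Real.log_nonneg (by linarith))).trans (Real.exp_le_exp.2 ?_)
  rw [Real.exp_log (by positivity)]
  linarith [chernoff_exponent_le he (by positivity) (degree_mul_mul_pow_le hp0 hp1 c i)]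

lemma transition_pow_indicator_lower_tail_le (hp0 : 0 ≤ p) (hp1 : p ≤ 1) {i m : ℕ} (hi : i < m)
    (c : ℕ →₀ ℕ) {e : ℝ} (he : 0 ≤ e) :
    (transition p ^ m)
        ({d | (d i : ℝ) ≤ c.degree * p * (1 - p) ^ i - e * (c.degree * p)}.indicator 1) c ≤
      Real.exp (-(chernoffRate e * (c.degree * p))) := by
  refine (transition_pow_indicator_le_exp hp0 hp1 hi c (s := -Real.log (1 + e)) fun d hd =>
    mul_le_mul_of_nonpos_left hd (neg_nonpos.2 (Real.log_nonneg (by linarith)))).trans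
      (Real.exp_le_exp.2 ?_)
  rw [Real.exp_neg, Real.exp_log (by positivity)]
  have hmean : 0 ≤ c.degree * p * (1 - p) ^ i :=
    mul_nonneg (by positivity) (pow_nonneg (sub_nonneg.2 hp1) i)
  linarith [mul_le_mul_of_nonneg_left (log_one_add_add_inv_sub_one_le he) hmean,
    chernoff_exponent_le he (by positivity) (degree_mul_mul_pow_le hp0 hp1 c i)]

lemma transition_pow_indicator_exists_ge_le (hp0 : 0 ≤ p) (hp1 : p ≤ 1) (m : ℕ) (c : ℕ →₀ ℕ) :
    (transition p ^ m) ({d | ∃ j ≥ m, d j ≠ 0}.indicator 1) c ≤ c.degree * (1 - p) ^ m := by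
  have hle : (1 - p) ^ m ≤ 1 := pow_le_one₀ (sub_nonneg.2 hp1) (by linarith)
  have hbernoulli := one_add_mul_le_pow (a := -(1 - p) ^ m) (by linarith) c.degree
  rw [transition_pow_indicator_exists_ge, sub_eq_add_neg 1 ((1 - p) ^ m)]
  linarith

/-- The configurations whose sorted pile sizes are not all within distance `t` of the geometric
profile `k ↦ a * r ^ k`. -/
def deviating (a r t : ℝ) : Set (ℕ →₀ ℕ) :=
  {d | ∃ k, t < |(ordC d k : ℝ) - a * r ^ k|}

lemma isSymmetric_indicator_deviating (a r t : ℝ) :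
    IsSymmetric ((deviating a r t).indicator 1) := by
  intro σ c
  have hmem : c.equivMapDomain σ ∈ deviating a r t ↔ c ∈ deviating a r t := by
    rw [deviating, Set.mem_ofPred, Set.mem_ofPred, ordC_equivMapDomain]
  classical
  simp only [Set.indicator_apply, hmem, Pi.one_apply]

lemma exists_of_mem_deviating {a r t : ℝ} (ha : 0 ≤ a) (hr0 : 0 ≤ r) (hr1 : r ≤ 1) {m : ℕ}
    (hm : a * r ^ m ≤ t) {d : ℕ →₀ ℕ} (hd : d ∈ deviating a r t) :
    (∃ i < m, a * r ^ i + t ≤ d i ∨ (d i : ℝ) ≤ a * r ^ i - t) ∨ ∃ j ≥ m, d j ≠ 0 := by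
  have hanti : Antitone fun k => a * r ^ k := fun i j hij =>
    mul_le_mul_of_nonneg_left (pow_le_pow_of_le_one hr0 hr1 hij) ha
  by_contra! h
  obtain ⟨hlt, hge⟩ := h
  obtain ⟨k, hk⟩ := hd
  refine hk.not_ge (abs_ordC_sub_le d.finite_range.bddAbove hanti (fun i => ?_) k)
  rcases lt_or_ge i m with hi | hi
  · rw [abs_sub_le_iff]
    constructor <;> linarith [hlt i hi]
  · rw [hge i hi, Nat.cast_zero, zero_sub, abs_neg, abs_of_nonneg (by positivity)]
    exact (hanti hi).trans hm

lemma indicator_deviating_le {a r t : ℝ} (ha : 0 ≤ a) (hr0 : 0 ≤ r) (hr1 : r ≤ 1) {m : ℕ}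
    (hm : a * r ^ m ≤ t) :
    (deviating a r t).indicator (1 : (ℕ →₀ ℕ) → ℝ) ≤
      ∑ i ∈ Finset.range m, ({d | a * r ^ i + t ≤ d i}.indicator 1 +
        {d | (d i : ℝ) ≤ a * r ^ i - t}.indicator 1) + {d | ∃ j ≥ m, d j ≠ 0}.indicator 1 := by
  have hnonneg (S : Set (ℕ →₀ ℕ)) : 0 ≤ S.indicator (1 : (ℕ →₀ ℕ) → ℝ) :=
    Set.indicator_nonneg fun _ _ => zero_le_one
  have hone {S : Set (ℕ →₀ ℕ)} {d : ℕ →₀ ℕ} (hd : d ∈ S) :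
      (1 : ℝ) ≤ S.indicator (1 : (ℕ →₀ ℕ) → ℝ) d := (Set.indicator_of_mem hd 1).ge
  set F : ℕ → (ℕ →₀ ℕ) → ℝ := fun i => {d | a * r ^ i + t ≤ d i}.indicator 1 +
    {d | (d i : ℝ) ≤ a * r ^ i - t}.indicator 1
  have hF0 (i : ℕ) : 0 ≤ F i := add_nonneg (hnonneg _) (hnonneg _)
  have hsum : 0 ≤ ∑ i ∈ Finset.range m, F i := Finset.sum_nonneg fun i _ => hF0 i
  refine Set.indicator_le' (fun d hd => ?_) fun d _ => add_nonneg hsum (hnonneg _) d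
  rcases exists_of_mem_deviating ha hr0 hr1 hm hd with ⟨i, hi, hdi⟩ | hd
  · have hFi : 1 ≤ F i d := hdi.elim
      (fun h => le_add_of_le_of_nonneg (hone h) (hnonneg _ d))
      (fun h => le_add_of_nonneg_of_le (hnonneg _ d) (hone h))
    have hFsum : F i ≤ ∑ i ∈ Finset.range m, F i :=
      Finset.single_le_sum (fun j _ => hF0 j) (Finset.mem_range.2 hi)
    exact le_add_of_le_of_nonneg (hFi.trans (hFsum d)) (hnonneg _ d)
  · exact le_add_of_nonneg_of_le (hsum d) (hone hd)

lemma transition_pow_indicator_deviating_le (hp0 : 0 ≤ p) (hp1 : p ≤ 1) {e : ℝ} (he : 0 ≤ e)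
    {m : ℕ} (hm : (1 - p) ^ m ≤ e) (c : ℕ →₀ ℕ) :
    (transition p ^ m)
        ((deviating (c.degree * p) (1 - p) (e * (c.degree * p))).indicator 1) c ≤
      2 * m * Real.exp (-(chernoffRate e * (c.degree * p))) + c.degree * (1 - p) ^ m := by
  have hmean : 0 ≤ c.degree * p := by positivity
  refine (monotone_transition_pow hp0 hp1 m (indicator_deviating_le hmean (sub_nonneg.2 hp1)
    (by linarith) ((mul_le_mul_of_nonneg_left hm hmean).trans_eq (mul_comm _ _))) c).trans ?_
  rw [map_add, map_sum, Pi.add_apply, Finset.sum_apply]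
  refine add_le_add ?_ (transition_pow_indicator_exists_ge_le hp0 hp1 m c)
  calc _ ≤ ∑ i ∈ Finset.range m, 2 * Real.exp (-(chernoffRate e * (c.degree * p))) := by
        refine Finset.sum_le_sum fun i hi => ?_
        rw [map_add, Pi.add_apply, two_mul]
        exact add_le_add
          (transition_pow_indicator_upper_tail_le hp0 hp1 (Finset.mem_range.1 hi) c he)
          (transition_pow_indicator_lower_tail_le hp0 hp1 (Finset.mem_range.1 hi) c he)
    _ = 2 * m * Real.exp (-(chernoffRate e * (c.degree * p))) := by
        rw [Finset.sum_const, Finset.card_range, nsmul_eq_mul]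
        ring

end Deviation

section Stationarity

variable {n : ℕ} {p : ℝ} {f : (ℕ →₀ ℕ) → ℝ} {π : (ℕ → ℕ) → ℝ}

open Classical in
/-- The partitions of `n`, as finitely supported functions. The number of parts is at most `n`. -/
noncomputable def partitions (n : ℕ) : Finset (ℕ →₀ ℕ) :=
  {c ∈ (Finset.range n).finsuppAntidiag n | Antitone c}

lemma support_subset_range_degree {c : ℕ →₀ ℕ} (hc : Antitone c) :
    c.support ⊆ Finset.range c.degree := by
  intro j hj
  have hpos {i : ℕ} (hi : i ∈ Finset.range (j + 1)) : 1 ≤ c i :=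
    (Nat.one_le_iff_ne_zero.2 (Finsupp.mem_support_iff.1 hj)).trans
      (hc (Finset.mem_range_succ_iff.1 hi))
  have hsub : Finset.range (j + 1) ⊆ c.support := fun i hi =>
    Finsupp.mem_support_iff.2 (Nat.one_le_iff_ne_zero.1 (hpos hi))
  refine Finset.mem_range.2 (Nat.succ_le_iff.1 ?_)
  calc j + 1 = ∑ _i ∈ Finset.range (j + 1), 1 := by simp
    _ ≤ ∑ i ∈ Finset.range (j + 1), c i := Finset.sum_le_sum fun _ => hpos
    _ ≤ c.degree := Finset.sum_le_sum_of_subset hsub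

lemma mem_partitions {c : ℕ →₀ ℕ} : c ∈ partitions n ↔ c.degree = n ∧ Antitone c := by
  classical
  rw [partitions, Finset.mem_filter, Finset.mem_finsuppAntidiag']
  constructor
  · rintro ⟨⟨hdeg, -⟩, hc⟩
    exact ⟨hdeg, hc⟩
  · rintro ⟨rfl, hc⟩
    exact ⟨⟨rfl, support_subset_range_degree hc⟩, hc⟩

lemma isPartitionOf_coe_iff {c : ℕ →₀ ℕ} : IsPartitionOf n c ↔ c ∈ partitions n := by
  rw [IsPartitionOf, IsWeakCompOf, finsum_coe_eq_degree, mem_partitions]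
  exact and_congr_left' (and_iff_right c.hasFiniteSupport)

open Classical in
lemma setOf_isPartitionOf_and (n : ℕ) (P : (ℕ → ℕ) → Prop) :
    {l | IsPartitionOf n l ∧ P l} =
      DFunLike.coe '' ((partitions n).filter fun c : ℕ →₀ ℕ => P c : Set (ℕ →₀ ℕ)) := by
  ext l
  simp only [Set.mem_ofPred_eq, Set.mem_image, Finset.mem_coe, Finset.mem_filter,
    ← isPartitionOf_coe_iff]
  constructor
  · rintro ⟨hl, hP⟩
    exact ⟨Finsupp.ofSupportFinite l hl.1.1, ⟨hl, hP⟩, rfl⟩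
  · rintro ⟨c, hc, rfl⟩
    exact hc

lemma finsum_mem_image_coe (s : Finset (ℕ →₀ ℕ)) (F : (ℕ → ℕ) → ℝ) :
    ∑ᶠ l ∈ DFunLike.coe '' (s : Set (ℕ →₀ ℕ)), F l = ∑ c ∈ s, F c := by
  rw [finsum_mem_image DFunLike.coe_injective.injOn, finsum_mem_coe_finset]

open Classical in
lemma finsum_mem_isPartitionOf_and (n : ℕ) (P : (ℕ → ℕ) → Prop) (F : (ℕ → ℕ) → ℝ) :
    ∑ᶠ l ∈ {l | IsPartitionOf n l ∧ P l}, F l =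
      ∑ c ∈ (partitions n).filter fun c : ℕ →₀ ℕ => P c, F c := by
  rw [setOf_isPartitionOf_and, finsum_mem_image_coe]

lemma finsum_mem_isPartitionOf (n : ℕ) (F : (ℕ → ℕ) → ℝ) :
    ∑ᶠ l ∈ {l | IsPartitionOf n l}, F l = ∑ c ∈ partitions n, F c := by
  simpa only [and_true, Finset.filter_true] using
    finsum_mem_isPartitionOf_and n (fun _ => True) F

lemma finprod_choose_mul_eq_drawProb (p : ℝ) (c b : ℕ →₀ ℕ) (hb : b ≤ c) :
    ∏ᶠ j, ((c j).choose (b j) : ℝ) * p ^ b j * (1 - p) ^ (c j - b j) = drawProb p c b := by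
  have hone {j : ℕ} (hj : j ∉ c.support) :
      ((c j).choose (b j) : ℝ) * p ^ b j * (1 - p) ^ (c j - b j) = 1 := by
    have hcj : c j = 0 := Finsupp.notMem_support_iff.1 hj
    have hbj : b j = 0 := Nat.le_zero.1 ((hb j).trans_eq hcj)
    simp [hcj, hbj]
  rw [finprod_eq_prod_of_mulSupport_subset _ fun j hj => not_not.1 (mt hone hj)]
  exact Finset.prod_congr rfl fun j _ => by rw [mul_assoc, mul_comm]

lemma coe_nextConfig (c b : ℕ →₀ ℕ) :
    (fun j => if j = 0 then ∑ᶠ i, b i else c (j - 1) - b (j - 1)) = nextConfig c b := by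
  funext j
  cases j with
  | zero => rw [if_pos rfl, finsum_coe_eq_degree, nextConfig_zero]
  | succ j => rw [if_neg j.succ_ne_zero, add_tsub_cancel_right, nextConfig_succ]

open Classical in
lemma stepProb_coe (p : ℝ) (c : ℕ →₀ ℕ) (l' : ℕ → ℕ) :
    stepProb p c l' = ∑ b ∈ Finset.Iic c with ordC (nextConfig c b) = l', drawProb p c b := by
  have hset : {b : ℕ → ℕ | (∀ j, b j ≤ c j) ∧
      ordC (fun j => if j = 0 then ∑ᶠ i, b i else c (j - 1) - b (j - 1)) = l'} =
      DFunLike.coe '' (↑{b ∈ Finset.Iic c | ordC (nextConfig c b) = l'} : Set (ℕ →₀ ℕ)) := by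
    ext b
    simp only [Set.mem_ofPred_eq, Set.mem_image, Finset.mem_coe, Finset.mem_filter,
      Finset.mem_Iic, ← coe_nextConfig]
    constructor
    · rintro ⟨hb, hord⟩
      have hfin : b.support.Finite := c.hasFiniteSupport.subset fun j hj hcj =>
        hj (Nat.le_zero.1 ((hb j).trans_eq hcj))
      exact ⟨Finsupp.ofSupportFinite b hfin, ⟨hb, hord⟩, rfl⟩
    · rintro ⟨b, hb, rfl⟩
      exact hb
  rw [stepProb, hset, finsum_mem_image_coe]
  exact Finset.sum_congr rfl fun b hb =>
    finprod_choose_mul_eq_drawProb p c b (Finset.mem_Iic.1 (Finset.mem_filter.1 hb).1)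

/-- The decreasing rearrangement `ordC` of a configuration, as a configuration. -/
noncomputable def sorted (c : ℕ →₀ ℕ) : ℕ →₀ ℕ :=
  c.equivMapDomain (exists_coe_equivMapDomain_eq_ordC c).choose

lemma coe_sorted (c : ℕ →₀ ℕ) : ⇑(sorted c) = ordC c :=
  (exists_coe_equivMapDomain_eq_ordC c).choose_spec.1

lemma sorted_mem_partitions (c : ℕ →₀ ℕ) : sorted c ∈ partitions c.degree := by
  refine mem_partitions.2 ⟨degree_equivMapDomain c _, ?_⟩
  rw [coe_sorted]
  exact (exists_coe_equivMapDomain_eq_ordC c).choose_spec.2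

/-- Symmetric functions do not see the sorting, so for them the chain on partitions and the
unsorted chain have the same transition operator. -/
lemma transition_eq_sum_stepProb (hf : IsSymmetric f) (p : ℝ) (c : ℕ →₀ ℕ) :
    transition p f c = ∑ c' ∈ partitions c.degree, stepProb p c c' * f c' := by
  classical
  have hmaps (b : ℕ →₀ ℕ) (hb : b ∈ Finset.Iic c) :
      sorted (nextConfig c b) ∈ partitions c.degree := by
    rw [← degree_nextConfig (Finset.mem_Iic.1 hb)]
    exact sorted_mem_partitions _
  rw [transition_apply, ← Finset.sum_fiberwise_of_maps_to hmaps]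
  refine Finset.sum_congr rfl fun c' _ => ?_
  rw [stepProb_coe, Finset.sum_mul]
  simp only [← coe_sorted, DFunLike.coe_fn_eq]
  refine Finset.sum_congr rfl fun b hb => ?_
  rw [← (Finset.mem_filter.1 hb).2, sorted, hf]

/-- The weight function `π` is invariant under one round of the solitaire on partitions of `n`. -/
def IsStationary (n : ℕ) (p : ℝ) (π : (ℕ → ℕ) → ℝ) : Prop :=
  ∀ l', IsPartitionOf n l' →
    ∑ᶠ l ∈ {l : ℕ → ℕ | IsPartitionOf n l}, π l * stepProb p l l' = π l'

lemma IsStationary.sum_mul_transition (hπ : IsStationary n p π) (hf : IsSymmetric f) :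
    ∑ c ∈ partitions n, π c * transition p f c = ∑ c ∈ partitions n, π c * f c := by
  calc ∑ c ∈ partitions n, π c * transition p f c
    _ = ∑ c ∈ partitions n, ∑ c' ∈ partitions n, π c * stepProb p c c' * f c' := by
        refine Finset.sum_congr rfl fun c hc => ?_
        rw [transition_eq_sum_stepProb hf, (mem_partitions.1 hc).1, Finset.mul_sum]
        exact Finset.sum_congr rfl fun _ _ => (mul_assoc _ _ _).symm
    _ = ∑ c' ∈ partitions n, π c' * f c' := by
        rw [Finset.sum_comm]
        refine Finset.sum_congr rfl fun c' hc' => ?_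
        rw [← Finset.sum_mul, ← finsum_mem_isPartitionOf n fun l => π l * stepProb p l c',
          hπ c' (isPartitionOf_coe_iff.2 hc')]

lemma IsStationary.sum_mul_transition_pow (hπ : IsStationary n p π) (hf : IsSymmetric f) (m : ℕ) :
    ∑ c ∈ partitions n, π c * (transition p ^ m) f c = ∑ c ∈ partitions n, π c * f c := by
  induction m with
  | zero => rw [pow_zero, Module.End.one_apply]
  | succ m ih =>
    rw [pow_succ', Module.End.mul_apply, hπ.sum_mul_transition (hf.transition_pow p m), ih]

lemma IsStationary.sum_mul_indicator_deviating_le (hπ : IsStationary n p π)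
    (hπ_nonneg : ∀ l, 0 ≤ π l) (hπ_total : ∑ c ∈ partitions n, π c = 1)
    (hp0 : 0 ≤ p) (hp1 : p ≤ 1) {e : ℝ} (he : 0 ≤ e) {m : ℕ} (hm : (1 - p) ^ m ≤ e) :
    ∑ c ∈ partitions n, π c * (deviating (n * p) (1 - p) (e * (n * p))).indicator 1 c ≤
      2 * m * Real.exp (-(chernoffRate e * (n * p))) + n * (1 - p) ^ m := by
  set B := 2 * m * Real.exp (-(chernoffRate e * (n * p))) + n * (1 - p) ^ m
  calc ∑ c ∈ partitions n, π c * (deviating (n * p) (1 - p) (e * (n * p))).indicator 1 c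
    _ = ∑ c ∈ partitions n,
          π c * (transition p ^ m) ((deviating (n * p) (1 - p) (e * (n * p))).indicator 1) c :=
        (hπ.sum_mul_transition_pow (isSymmetric_indicator_deviating _ _ _) m).symm
    _ ≤ ∑ c ∈ partitions n, π c * B := by
        refine Finset.sum_le_sum fun c hc => mul_le_mul_of_nonneg_left ?_ (hπ_nonneg c)
        obtain ⟨rfl, -⟩ := mem_partitions.1 hc
        exact transition_pow_indicator_deviating_le hp0 hp1 he hm c
    _ = B := by rw [← Finset.sum_mul, hπ_total, one_mul]

end Stationarity

section LimitShape

variable {p : ℝ}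

lemma one_sub_pow_le_exp_neg (hp1 : p ≤ 1) (k : ℕ) : (1 - p) ^ k ≤ Real.exp (-(k * p)) := by
  rw [← mul_neg, Real.exp_nat_mul]
  exact pow_le_pow_left₀ (sub_nonneg.2 hp1) (Real.one_sub_le_exp_neg p) k

lemma inv_one_sub_eq_one_add_div (hp1 : p < 1) : (1 - p)⁻¹ = 1 + p / (1 - p) := by
  have hne : 1 - p ≠ 0 := (sub_pos.2 hp1).ne'
  field_simp
  ring

lemma one_sub_pow_sub_exp_neg_le (hp0 : 0 ≤ p) (hp1 : p < 1) {x : ℝ} (hx : 0 ≤ x) {k : ℕ}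
    (hk : x ≤ k * p + p) : (1 - p) ^ k - Real.exp (-x) ≤ p / (1 - p) := by
  have hexp : Real.exp p ≤ 1 + p / (1 - p) := by
    rw [← inv_one_sub_eq_one_add_div hp1, le_inv_comm₀ (Real.exp_pos p) (sub_pos.2 hp1),
      ← Real.exp_neg]
    exact Real.one_sub_le_exp_neg p
  calc (1 - p) ^ k - Real.exp (-x)
    _ ≤ Real.exp (-(k * p)) - Real.exp (-x) :=
        sub_le_sub_right (one_sub_pow_le_exp_neg hp1.le k) _
    _ ≤ Real.exp (-x) * Real.exp p - Real.exp (-x) := by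
        rw [← Real.exp_add]
        exact sub_le_sub_right (Real.exp_le_exp.2 (by linarith)) _
    _ ≤ Real.exp (-x) * (1 + p / (1 - p)) - Real.exp (-x) := by gcongr
    _ = Real.exp (-x) * (p / (1 - p)) := by ring
    _ ≤ p / (1 - p) :=
        mul_le_of_le_one_left (div_nonneg hp0 (sub_pos.2 hp1).le)
          (Real.exp_le_one_iff.2 (neg_nonpos.2 hx))

lemma mul_exp_neg_le_one (y : ℝ) : y * Real.exp (-y) ≤ 1 := by
  rw [Real.exp_neg, mul_inv_le_iff₀ (Real.exp_pos y), one_mul]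
  linarith [Real.add_one_le_exp y]

lemma exp_neg_sub_one_sub_pow_le (hp0 : 0 ≤ p) (hp1 : p < 1) (k : ℕ) :
    Real.exp (-(k * p)) - (1 - p) ^ k ≤ p / (1 - p) := by
  have hpos : 0 < 1 - p := sub_pos.2 hp1
  set η := p / (1 - p) with hη
  have hη0 : 0 ≤ η := div_nonneg hp0 hpos.le
  have hpη : η = p + p * η := by
    rw [hη]
    field_simp
    ring
  have hexp : Real.exp (-η) ≤ 1 - p := by
    rw [Real.exp_neg, inv_le_comm₀ (Real.exp_pos _) hpos, inv_one_sub_eq_one_add_div hp1, add_comm]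
    exact Real.add_one_le_exp η
  have hkη : k * -η = -(k * p) + -(k * p * η) := by linear_combination (-(k : ℝ)) * hpη
  calc Real.exp (-(k * p)) - (1 - p) ^ k
    _ ≤ Real.exp (-(k * p)) - Real.exp (-η) ^ k := by gcongr
    _ = Real.exp (-(k * p)) * (1 - Real.exp (-(k * p * η))) := by
        rw [← Real.exp_nat_mul, hkη, Real.exp_add]
        ring
    _ ≤ Real.exp (-(k * p)) * (k * p * η) := by
        gcongr
        linarith [Real.one_sub_le_exp_neg (k * p * η)]
    _ = k * p * Real.exp (-(k * p)) * η := by ring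
    _ ≤ η := mul_le_of_le_one_left hη0 (mul_exp_neg_le_one _)

lemma abs_one_sub_pow_floor_sub_exp_neg_le (hp0 : 0 < p) (hp1 : p < 1) {x : ℝ} (hx : 0 ≤ x) :
    |(1 - p) ^ ⌊1 / p * x⌋₊ - Real.exp (-x)| ≤ p / (1 - p) := by
  set k := ⌊1 / p * x⌋₊
  have hle : k * p ≤ x := by
    have hfloor := Nat.floor_le (by positivity : 0 ≤ 1 / p * x)
    rwa [one_div_mul_eq_div, le_div_iff₀ hp0, ← one_div_mul_eq_div] at hfloor
  have hlt : x < k * p + p := by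
    have hfloor := Nat.lt_floor_add_one (1 / p * x)
    rwa [one_div_mul_eq_div, div_lt_iff₀ hp0, ← one_div_mul_eq_div, add_one_mul] at hfloor
  rw [abs_sub_le_iff]
  refine ⟨one_sub_pow_sub_exp_neg_le hp0.le hp1 hx hlt.le, ?_⟩
  exact (sub_le_sub_right (Real.exp_le_exp.2 (neg_le_neg hle)) _).trans
    (exp_neg_sub_one_sub_pow_le hp0.le hp1 k)

variable {n : ℕ} {e : ℝ} {c : ℕ →₀ ℕ}

lemma abs_rescaledBoundary_sub_pow_floor_le (hn : 0 < n) (hp0 : 0 < p) (hc : Antitone c)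
    (hdev : c ∉ deviating (n * p) (1 - p) (e * (n * p))) (x : ℝ) :
    |rescaledBoundary n (1 / p) c x - (1 - p) ^ ⌊1 / p * x⌋₊| ≤ e := by
  have hpos : 0 < n * p := by positivity
  set k := ⌊1 / p * x⌋₊ with hk
  have hck : |(c k : ℝ) - n * p * (1 - p) ^ k| ≤ e * (n * p) := by
    rw [deviating, Set.mem_ofPred, ordC_of_antitone hc] at hdev
    push Not at hdev
    exact hdev k
  have hdiv : rescaledBoundary n (1 / p) c x - (1 - p) ^ k =
      (c k - n * p * (1 - p) ^ k) / (n * p) := by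
    rw [rescaledBoundary, ← hk]
    field_simp
  rwa [hdiv, abs_div, abs_of_pos hpos, div_le_iff₀ hpos]

lemma iSup_abs_rescaledBoundary_sub_exp_neg_le (hn : 0 < n) (hp0 : 0 < p) (hp1 : p < 1)
    (hc : Antitone c) (hdev : c ∉ deviating (n * p) (1 - p) (e * (n * p))) :
    ⨆ x : NNReal, |rescaledBoundary n (1 / p) c x - Real.exp (-(x : ℝ))| ≤ e + p / (1 - p) :=
  ciSup_le fun x => (abs_sub_le _ _ _).trans (add_le_add
    (abs_rescaledBoundary_sub_pow_floor_le hn hp0 hc hdev x)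
    (abs_one_sub_pow_floor_sub_exp_neg_le hp0 hp1 x.2))

lemma IsStationary.one_sub_le_finsum_iSup_le {π : (ℕ → ℕ) → ℝ} (hπ : IsStationary n p π)
    (hπ_nonneg : ∀ l, 0 ≤ π l) (hπ_total : ∑ᶠ l ∈ {l : ℕ → ℕ | IsPartitionOf n l}, π l = 1)
    (hn : 0 < n) (hp0 : 0 < p) (hp1 : p < 1) {ε : ℝ} (he : 0 ≤ e) (hε : e + p / (1 - p) ≤ ε)
    {m : ℕ} (hm : (1 - p) ^ m ≤ e) :
    1 - (2 * m * Real.exp (-(chernoffRate e * (n * p))) + n * (1 - p) ^ m) ≤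
      ∑ᶠ l ∈ {l : ℕ → ℕ | IsPartitionOf n l ∧
        (⨆ x : NNReal, |rescaledBoundary n (1 / p) l x - Real.exp (-(x : ℝ))|) ≤ ε}, π l := by
  classical
  rw [finsum_mem_isPartitionOf] at hπ_total
  rw [finsum_mem_isPartitionOf_and n fun l =>
    (⨆ x : NNReal, |rescaledBoundary n (1 / p) l x - Real.exp (-(x : ℝ))|) ≤ ε]
  set good : (ℕ →₀ ℕ) → Prop := fun c =>
    (⨆ x : NNReal, |rescaledBoundary n (1 / p) c x - Real.exp (-(x : ℝ))|) ≤ ε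
  set D := deviating (n * p) (1 - p) (e * (n * p))
  have hle : ∀ c ∈ partitions n, π c ≤ (if good c then π c else 0) + π c * D.indicator 1 c := by
    intro c hc
    by_cases hD : c ∈ D
    · rw [Set.indicator_of_mem hD, Pi.one_apply, mul_one, le_add_iff_nonneg_left]
      exact ite_nonneg (hπ_nonneg c) le_rfl
    · have hgood : good c := (iSup_abs_rescaledBoundary_sub_exp_neg_le hn hp0 hp1
        (mem_partitions.1 hc).2 hD).trans hε
      rw [Set.indicator_of_notMem hD, mul_zero, add_zero, if_pos hgood]
  have hsum := Finset.sum_le_sum hle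
  rw [hπ_total, Finset.sum_add_distrib, ← Finset.sum_filter] at hsum
  linarith [hπ.sum_mul_indicator_deviating_le hπ_nonneg hπ_total hp0.le hp1.le he hm]

end LimitShape

section Asymptotics

lemma chernoffRate_mul_one_sub_lt {ε δ : ℝ} (hε : 0 < ε) (hδ0 : 0 < δ) (hδ1 : δ < 1) :
    chernoffRate ε * (1 - δ) < chernoffRate (ε * (1 - δ / 2)) := by
  have he : 0 < ε * (1 - δ / 2) := mul_pos hε (by linarith)
  have hle : ε * (1 - δ / 2) ≤ ε := mul_le_of_le_one_right hε.le (by linarith)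
  have hrate : 0 < chernoffRate ε := div_pos (pow_pos hε 2) (by linarith)
  calc chernoffRate ε * (1 - δ)
    _ < chernoffRate ε * (1 - δ / 2) ^ 2 :=
        mul_lt_mul_of_pos_left (by linarith [pow_pos hδ0 2]) hrate
    _ = (ε * (1 - δ / 2)) ^ 2 / (2 + ε) := by
        rw [chernoffRate]
        ring
    _ ≤ chernoffRate (ε * (1 - δ / 2)) := by
        unfold chernoffRate
        gcongr

lemma eventually_add_div_one_sub_le {α : Type*} {l : Filter α} {p : α → ℝ}
    (hp : Tendsto p l (nhds 0)) {e ε : ℝ} (h : e < ε) : ∀ᶠ a in l, e + p a / (1 - p a) ≤ ε := by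
  have hlim : Tendsto (fun a => e + p a / (1 - p a)) l (nhds (e + 0 / (1 - 0))) :=
    (hp.div (hp.const_sub 1) (by norm_num)).const_add e
  rw [zero_div, add_zero] at hlim
  exact hlim.eventually_le_const h

lemma eventually_mul_log_le {p : ℕ → ℝ}
    (hp : Tendsto (fun n => p n / (Real.log n / n)) atTop atTop) (K : ℝ) :
    ∀ᶠ n : ℕ in atTop, K * Real.log n ≤ n * p n := by
  filter_upwards [hp.eventually_ge_atTop K, eventually_gt_atTop 1] with n hK hn
  have hlog : 0 < Real.log n := Real.log_pos (Nat.one_lt_cast.2 hn)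
  have hpos : (0 : ℝ) < n := by positivity
  rwa [le_div_iff₀ (div_pos hlog hpos), mul_div_assoc', div_le_iff₀ hpos, mul_comm (p n)] at hK

variable {x : ℕ → ℝ}

lemma eventually_exp_neg_le (hx : ∀ K, ∀ᶠ n : ℕ in atTop, K * Real.log n ≤ x n) {e : ℝ}
    (he : 0 < e) : ∀ᶠ n in atTop, Real.exp (-x n) ≤ e := by
  have hlim : Tendsto x atTop atTop := by
    refine tendsto_atTop_mono' _ ((hx 1).mono fun n hn => ?_)
      (Real.tendsto_log_atTop.comp tendsto_natCast_atTop_atTop)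
    rwa [one_mul] at hn
  exact (Real.tendsto_exp_neg_atTop_nhds_zero.comp hlim).eventually_le_const he

lemma eventually_mul_exp_neg_le (hx : ∀ K, ∀ᶠ n : ℕ in atTop, K * Real.log n ≤ x n) {a b : ℝ}
    (hab : a < b) (C : ℝ) :
    ∀ᶠ n : ℕ in atTop, C * n * Real.exp (-(b * x n)) ≤ Real.exp (-(a * x n)) := by
  filter_upwards [hx (2 / (b - a)), eventually_ge_atTop ⌈C⌉₊, eventually_gt_atTop 0]
    with n hlog hC hn
  have hpos : (0 : ℝ) < n := Nat.cast_pos.2 hn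
  rw [div_mul_eq_mul_div, div_le_iff₀ (sub_pos.2 hab)] at hlog
  calc C * n * Real.exp (-(b * x n))
    _ ≤ n * n * Real.exp (-(b * x n)) := by
        gcongr
        exact Nat.ceil_le.1 hC
    _ = Real.exp (2 * Real.log n - b * x n) := by
        rw [two_mul, sub_eq_add_neg, Real.exp_add, Real.exp_add, Real.exp_log hpos]
    _ ≤ Real.exp (-(a * x n)) := Real.exp_le_exp.2 (by linarith)

lemma one_sub_pow_mul_le_exp_neg {p ρ : ℝ} (hp0 : 0 ≤ p) (hp1 : p ≤ 1) {C : ℕ} (hρ : ρ ≤ C)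
    (n : ℕ) : (1 - p) ^ (C * n) ≤ Real.exp (-(ρ * (n * p))) := by
  refine (one_sub_pow_le_exp_neg hp1 _).trans (Real.exp_le_exp.2 (neg_le_neg ?_))
  rw [Nat.cast_mul, mul_assoc]
  gcongr

lemma two_mul_exp_neg_add_one_sub_pow_mul_le {p ρ : ℝ} (hp0 : 0 ≤ p) (hp1 : p ≤ 1) {C : ℕ}
    (hρ : ρ ≤ C) (n : ℕ) :
    2 * (C * n : ℕ) * Real.exp (-(ρ * (n * p))) + n * (1 - p) ^ (C * n) ≤
      (2 * C + 1) * n * Real.exp (-(ρ * (n * p))) := by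
  have hpow := mul_le_mul_of_nonneg_left (one_sub_pow_mul_le_exp_neg hp0 hp1 hρ n)
    (Nat.cast_nonneg (α := ℝ) n)
  rw [Nat.cast_mul]
  linarith

end Asymptotics

end BulgarianSolitaire

open BulgarianSolitaire

/-- The stationary distribution of the card-based stochastic Bulgarian solitaire has the
limit shape `e^{-x}` with scaling `1/p`, with the stated bound on the probability of
deviation. -/
theorem stationary_measure_limit_shape
    (p : ℕ → ℝ) (hp : ∀ n, 0 < p n ∧ p n < 1)
    (hp0 : Tendsto p atTop (nhds 0))
    (hplog : Tendsto (fun n => p n / (Real.log n / n)) atTop atTop)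
    (π : ℕ → (ℕ → ℕ) → ℝ)
    (hπ_nonneg : ∀ n l, 0 ≤ π n l)
    (hπ_supp : ∀ n l, ¬ IsPartitionOf n l → π n l = 0)
    (hπ_total : ∀ n, 0 < n → ∑ᶠ l ∈ {l : ℕ → ℕ | IsPartitionOf n l}, π n l = 1)
    (hπ_stat : ∀ n, 0 < n → ∀ l', IsPartitionOf n l' →
      ∑ᶠ l ∈ {l : ℕ → ℕ | IsPartitionOf n l}, π n l * stepProb (p n) l l' = π n l') :
    ∀ ε δ : ℝ, 0 < ε → 0 < δ → δ < 1 → ∃ N : ℕ, ∀ n, N ≤ n →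
      1 - Real.exp (-(ε ^ 2 / (2 + ε)) * n * p n * (1 - δ)) ≤
        ∑ᶠ l ∈ {l : ℕ → ℕ | IsPartitionOf n l ∧
          (⨆ x : NNReal,
            |rescaledBoundary n (1 / p n) l x - Real.exp (-(x : ℝ))|) ≤ ε}, π n l := by
  intro ε δ hε hδ0 hδ1
  have he0 : 0 < ε * (1 - δ / 2) := mul_pos hε (by linarith)
  have heε : ε * (1 - δ / 2) < ε := mul_lt_of_lt_one_right hε (by linarith)
  have hrate := chernoffRate_mul_one_sub_lt hε hδ0 hδ1
  set e := ε * (1 - δ / 2)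
  obtain ⟨C, hC⟩ := exists_nat_ge (max (chernoffRate e) 1)
  obtain ⟨hCrate, hC1⟩ := max_le_iff.1 hC
  have hlog := eventually_mul_log_le hplog
  rw [← eventually_atTop]
  filter_upwards [eventually_add_div_one_sub_le hp0 heε, eventually_exp_neg_le hlog he0,
    eventually_mul_exp_neg_le hlog hrate (2 * C + 1), eventually_gt_atTop 0]
    with n hshape hescape hunion hn
  obtain ⟨hpos, hlt⟩ := hp n
  have hm : (1 - p n) ^ (C * n) ≤ e :=
    (one_sub_pow_mul_le_exp_neg hpos.le hlt.le hC1 n).trans (by rwa [one_mul])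
  have hbound := IsStationary.one_sub_le_finsum_iSup_le (hπ_stat n hn) (hπ_nonneg n)
    (hπ_total n hn) hn hpos hlt he0.le hshape hm
  have hexp : -(ε ^ 2 / (2 + ε)) * n * p n * (1 - δ) =
      -(chernoffRate ε * (1 - δ) * (n * p n)) := by
    rw [chernoffRate]
    ring
  rw [hexp]
  exact (sub_le_sub_left ((two_mul_exp_neg_add_one_sub_pow_mul_le hpos.le hlt.le hCrate n).trans
    hunion) 1).trans hbound
end
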